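/- arXiv:2204.13876 — 12 statements merged into one kernel-verified Lean document; each statement's English description precedes it below -/
import Mathlib

section
/- For all natural numbers n and m with 1 ≤ m < n, the total circular island count satisfies 𝓓ⁿₘ = Σ_{A ⊆ ℤ/nℤ, |A| = m} #{i ∈ A : i+1 ∉ A} = n · C(n−2, m−1), where C denotes the binomial coefficient. -/
/-- `circD n m` is the total circular island count: the sum, over all `m`-element
subsets `A` of `ℤ/nℤ`, of the number of islands of `A` on the circle, i.e. of
`#{i ∈ A : i + 1 ∉ A}` (addition mod `n`). -/
def circD (n m : ℕ) [NeZero n] : ℕ :=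
  ∑ A ∈ Finset.powersetCard m (Finset.univ : Finset (ZMod n)),
    (A.filter (fun i => i + 1 ∉ A)).card

theorem count_aux {α : Type*} [Fintype α] [DecidableEq α] (a b : α) (hab : a ≠ b) (m : ℕ)
    (hm : 1 ≤ m) :
    ((Finset.powersetCard m (Finset.univ : Finset α)).filter
      (fun A => a ∈ A ∧ b ∉ A)).card = Nat.choose (Fintype.card α - 2) (m - 1) := by
  have hc : (Finset.univ \ {a, b} : Finset α).card = Fintype.card α - 2 := by
    rw [Finset.card_sdiff_of_subset (Finset.subset_univ _), Finset.card_pair hab,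
      Finset.card_univ]
  rw [← hc, ← Finset.card_powersetCard]
  refine Finset.card_bij' (fun A _ => A.erase a) (fun B _ => insert a B) ?_ ?_ ?_ ?_
  · intro A hA
    simp only [Finset.mem_filter, Finset.mem_powersetCard] at hA ⊢
    obtain ⟨⟨-, h1⟩, h2, h3⟩ := hA
    refine ⟨?_, by rw [Finset.card_erase_of_mem h2, h1]⟩
    intro x hx
    simp only [Finset.mem_erase, Finset.mem_sdiff, Finset.mem_univ, Finset.mem_insert,
      Finset.mem_singleton, true_and, not_or] at hx ⊢
    exact ⟨hx.1, fun h => h3 (h ▸ hx.2)⟩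
  · intro B hB
    simp only [Finset.mem_filter, Finset.mem_powersetCard] at hB ⊢
    obtain ⟨h1, h2⟩ := hB
    have ha : a ∉ B := fun h => by simpa using h1 h
    have hb : b ∉ B := fun h => by simpa using h1 h
    refine ⟨⟨Finset.subset_univ _, ?_⟩, Finset.mem_insert_self _ _, ?_⟩
    · rw [Finset.card_insert_of_notMem ha, h2]; omega
    · simp [hab.symm, hb]
  · intro A hA
    simp only [Finset.mem_filter] at hA
    exact Finset.insert_erase hA.2.1
  · intro B hB
    simp only [Finset.mem_powersetCard] at hB
    exact Finset.erase_insert (fun h => by simpa using hB.1 h)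

theorem circular_island_count (n m : ℕ) [NeZero n] (hm : 1 ≤ m) (hmn : m < n) :
    circD n m = n * Nat.choose (n - 2) (m - 1) := by
  have hne : ∀ i : ZMod n, i ≠ i + 1 := by
    intro i h
    have : Fact (1 < n) := ⟨by omega⟩
    exact one_ne_zero (left_eq_add.mp h)
  unfold circD
  have h1 : ∀ A : Finset (ZMod n), (A.filter (fun i => i + 1 ∉ A)).card
      = ∑ i : ZMod n, if (i ∈ A ∧ i + 1 ∉ A) then 1 else 0 := by
    intro A
    rw [← Finset.card_filter]
    congr 1
    ext i
    simp
  simp_rw [h1]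
  rw [Finset.sum_comm]
  simp_rw [← Finset.card_filter]
  rw [Finset.sum_congr rfl (fun i _ => count_aux i (i + 1) (hne i) m hm)]
  simp [ZMod.card]
end

section
/- For all natural numbers n and m with 1 ≤ m < n, the alternating binomial identity Σ_{j=0}^{m−1} (−1)^j · (m−j) · C(n, m−j) = n · C(n−2, m−1) holds, where C denotes the binomial coefficient and the identity is an equation of integers. -/
theorem alt_binom_aux (k p : ℕ) :
    ∑ j ∈ Finset.range (p + 1), (-1 : ℤ) ^ j * ((p + 1 - j : ℕ) : ℤ) *
      (Nat.choose (k + 2) (p + 1 - j) : ℤ) = ((k : ℤ) + 2) * (Nat.choose k p : ℤ) := by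
  induction p with
  | zero => simp
  | succ p ih =>
    rw [Finset.sum_range_succ']
    have h1 : ∑ j ∈ Finset.range (p + 1), (-1 : ℤ) ^ (j + 1) * ((p + 1 + 1 - (j + 1) : ℕ) : ℤ) *
        (Nat.choose (k + 2) (p + 1 + 1 - (j + 1)) : ℤ) = -(((k : ℤ) + 2) * (Nat.choose k p : ℤ)) := by
      rw [← ih, ← Finset.sum_neg_distrib]
      refine Finset.sum_congr rfl fun j _ => ?_
      rw [Nat.add_sub_add_right, pow_succ]
      ring
    rw [h1]
    have h2 := Nat.add_one_mul_choose_eq (k + 1) (p + 1)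
    rw [Nat.choose_succ_succ k p] at h2
    have h3 : ((k : ℤ) + 1 + 1) * ((k.choose p : ℤ) + (k.choose (p + 1) : ℤ))
        = ((k + 2).choose (p + 2) : ℤ) * ((p : ℤ) + 1 + 1) := by exact_mod_cast h2
    simp only [Nat.sub_zero, pow_zero, one_mul]
    push_cast
    linear_combination -h3

theorem alternating_binomial_identity (n m : ℕ) (hm : 1 ≤ m) (hmn : m < n) :
    ∑ j ∈ Finset.range m, (-1 : ℤ) ^ j * ((m - j : ℕ) : ℤ) * (Nat.choose n (m - j) : ℤ)
      = (n : ℤ) * (Nat.choose (n - 2) (m - 1) : ℤ) := by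
  obtain ⟨p, rfl⟩ : ∃ p, m = p + 1 := ⟨m - 1, by omega⟩
  obtain ⟨k, rfl⟩ : ∃ k, n = k + 2 := ⟨n - 2, by omega⟩
  rw [alt_binom_aux]
  simp
end

section
/- For all natural numbers n and m with 1 ≤ m ≤ n, the total linear island count satisfies 𝓑ⁿₘ = Σ_{A ⊆ {1,…,n}, |A| = m} #{i ∈ A : i+1 ∉ A} = (n − m + 1) · C(n−1, m−1), where C denotes the binomial coefficient. -/
/-- `linB n m` is the total linear island count: the sum, over all `m`-element
subsets `A` of `{1, …, n}`, of the number of islands of `A` on the line, i.e. of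
`#{i ∈ A : i + 1 ∉ A}` (addition in `ℕ`). -/
def linB (n m : ℕ) : ℕ :=
  ∑ A ∈ Finset.powersetCard m (Finset.Icc 1 n),
    (A.filter (fun i => i + 1 ∉ A)).card

lemma count_aux_s2 (S : Finset ℕ) (k i : ℕ) (hi : i ∈ S) :
    ((Finset.powersetCard (k+1) S).filter (fun A => i ∈ A ∧ i + 1 ∉ A)).card
      = ((S.erase i).erase (i+1)).card.choose k := by
  rw [← Finset.card_powersetCard]
  refine Finset.card_bij' (fun A _ => A.erase i) (fun B _ => insert i B) ?_ ?_ ?_ ?_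
  · intro A hA
    simp only [Finset.mem_filter, Finset.mem_powersetCard] at hA ⊢
    obtain ⟨⟨h1, h2⟩, h3, h4⟩ := hA
    refine ⟨fun x hx => ?_, by rw [Finset.card_erase_of_mem h3, h2]; rfl⟩
    have := @h1 x
    grind
  · intro B hB
    simp only [Finset.mem_filter, Finset.mem_powersetCard] at hB ⊢
    obtain ⟨h1, h2⟩ := hB
    have hiB : i ∉ B := fun h => by have := h1 h; grind
    have hiB' : i + 1 ∉ B := fun h => by have := h1 h; grind
    refine ⟨⟨fun x hx => ?_, by rw [Finset.card_insert_of_notMem hiB, h2]⟩, by simp, by simp [hiB']⟩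
    have := @h1 x
    grind
  · intro A hA
    simp only [Finset.mem_filter] at hA
    exact Finset.insert_erase hA.2.1
  · intro B hB
    simp only [Finset.mem_powersetCard] at hB
    exact Finset.erase_insert (fun h => by have := hB.1 h; grind)

theorem linear_island_count (n m : ℕ) (hm : 1 ≤ m) (hmn : m ≤ n) :
    linB n m = (n - m + 1) * Nat.choose (n - 1) (m - 1) := by
  obtain ⟨k, rfl⟩ : ∃ k, m = k + 1 := ⟨m - 1, by omega⟩
  obtain ⟨N, rfl⟩ : ∃ N, n = N + 1 := ⟨n - 1, by omega⟩
  have h1 : linB (N+1) (k+1) = ∑ i ∈ Finset.Icc 1 (N+1),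
      (((Finset.Icc 1 (N+1)).erase i).erase (i+1)).card.choose k := by
    unfold linB
    have : ∀ A ∈ Finset.powersetCard (k+1) (Finset.Icc 1 (N+1)),
        (A.filter (fun i => i + 1 ∉ A)).card
          = ∑ i ∈ Finset.Icc 1 (N+1), if (i ∈ A ∧ i + 1 ∉ A) then 1 else 0 := by
      intro A hA
      rw [← Finset.card_filter]
      congr 1
      ext x
      have := @(Finset.mem_powersetCard.1 hA).1 x
      simp only [Finset.mem_filter]
      tauto
    rw [Finset.sum_congr rfl this, Finset.sum_comm]
    refine Finset.sum_congr rfl fun i hi => ?_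
    rw [← Finset.card_filter, count_aux_s2 _ _ _ hi]
  have h2 : ∀ i ∈ Finset.Icc 1 N,
      (((Finset.Icc 1 (N+1)).erase i).erase (i+1)).card.choose k = (N-1).choose k := by
    intro i hi
    rw [Finset.mem_Icc] at hi
    rw [Finset.card_erase_of_mem (by simp; omega), Finset.card_erase_of_mem (by simp; omega)]
    simp
  have h3 : (((Finset.Icc 1 (N+1)).erase (N+1)).erase (N+1+1)).card = N := by
    rw [Finset.erase_eq_of_notMem (by simp), Finset.card_erase_of_mem (by simp)]
    simp
  rw [h1, Finset.sum_Icc_succ_top (by omega), Finset.sum_congr rfl h2, h3]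
  simp only [Finset.sum_const, Nat.card_Icc, smul_eq_mul, Nat.add_sub_cancel, Nat.add_sub_add_right]
  rw [add_mul, one_mul]
  congr 1
  cases N with
  | zero => simp
  | succ M =>
    have := Nat.choose_mul_succ_eq M k
    simp only [Nat.add_sub_cancel]
    rw [mul_comm, this, mul_comm]
end

section
/- For all natural numbers n and m with 1 ≤ m ≤ n, the linear island counts satisfy the recurrence 𝓑ⁿₘ = 𝓑ⁿ⁻¹ₘ + Σ_{r=1}^{m−1} ( 𝓑^{n−r−1}_{m−r} + C(n−r−1, m−r) ) + 1, where C denotes the binomial coefficient and 𝓑ᵃᵦ = 0 whenever b > a or b = 0. -/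
def isl (A : Finset ℕ) : ℕ := (A.filter (fun i => i + 1 ∉ A)).card

def linD (n m : ℕ) : ℕ :=
  ∑ A ∈ Finset.powersetCard m (Finset.Icc 1 n), isl (insert (n + 1) A)

lemma sum_split (f : Finset ℕ → ℕ) (n m : ℕ) :
    ∑ A ∈ Finset.powersetCard (m + 1) (Finset.Icc 1 (n + 1)), f A
      = ∑ A ∈ Finset.powersetCard (m + 1) (Finset.Icc 1 n), f A
        + ∑ A ∈ Finset.powersetCard m (Finset.Icc 1 n), f (insert (n + 1) A) := by
  have hI : Finset.Icc 1 (n + 1) = insert (n + 1) (Finset.Icc 1 n) := by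
    ext x; simp only [Finset.mem_Icc, Finset.mem_insert]; omega
  have hn : n + 1 ∉ Finset.Icc 1 n := by simp
  have hmem : ∀ k, ∀ A ∈ Finset.powersetCard k (Finset.Icc 1 n), n + 1 ∉ A := by
    intro k A hA h
    exact hn ((Finset.mem_powersetCard.1 hA).1 h)
  rw [hI, Finset.powersetCard_succ_insert hn, Finset.sum_union, Finset.sum_image]
  · intro A hA B hB h
    have h1 := hmem _ A hA
    have h2 := hmem _ B hB
    rw [← Finset.erase_insert h1, ← Finset.erase_insert h2]
    exact congrArg (fun S => Finset.erase S (n + 1)) h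
  · rw [Finset.disjoint_left]
    intro A hA hB
    obtain ⟨B, _, rfl⟩ := Finset.mem_image.1 hB
    exact hmem _ _ hA (Finset.mem_insert_self _ _)

lemma isl_a (n : ℕ) (A : Finset ℕ) (hA : A ⊆ Finset.Icc 1 n) :
    isl (insert (n + 2) A) = isl A + 1 := by
  have hb : ∀ x ∈ A, x ≤ n := fun x hx => (Finset.mem_Icc.1 (hA hx)).2
  have h : (insert (n + 2) A).filter (fun i => i + 1 ∉ insert (n + 2) A)
      = insert (n + 2) (A.filter (fun i => i + 1 ∉ A)) := by
    ext x
    simp only [Finset.mem_filter, Finset.mem_insert]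
    have h1 := hb x
    have h2 := hb (x + 1)
    grind
  unfold isl
  rw [h, Finset.card_insert_of_notMem]
  intro hx
  have := hb _ (Finset.mem_filter.1 hx).1
  omega

lemma isl_b (n : ℕ) (A : Finset ℕ) (hA : A ⊆ Finset.Icc 1 n) :
    isl (insert (n + 2) (insert (n + 1) A)) = isl (insert (n + 1) A) := by
  have hb : ∀ x ∈ A, x ≤ n := fun x hx => (Finset.mem_Icc.1 (hA hx)).2
  have h : (insert (n + 2) (insert (n + 1) A)).filter
        (fun i => i + 1 ∉ insert (n + 2) (insert (n + 1) A))
      = insert (n + 2) (A.filter (fun i => i + 1 ∉ A ∧ i ≠ n)) := by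
    ext x
    simp only [Finset.mem_filter, Finset.mem_insert]
    have h1 := hb x
    have h2 := hb (x + 1)
    grind
  have h' : (insert (n + 1) A).filter (fun i => i + 1 ∉ insert (n + 1) A)
      = insert (n + 1) (A.filter (fun i => i + 1 ∉ A ∧ i ≠ n)) := by
    ext x
    simp only [Finset.mem_filter, Finset.mem_insert]
    have h1 := hb x
    have h2 := hb (x + 1)
    grind
  unfold isl
  rw [h, h', Finset.card_insert_of_notMem, Finset.card_insert_of_notMem]
  all_goals
    intro hx
    have := hb _ (Finset.mem_filter.1 hx).1
    omega

lemma linB_succ (n m : ℕ) : linB (n + 1) (m + 1) = linB n (m + 1) + linD n m :=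
  sum_split isl n m

lemma linD_zero (n : ℕ) : linD n 0 = 1 := by
  simp [linD, isl, Finset.filter_singleton]

lemma linD_succ (n m : ℕ) :
    linD (n + 1) (m + 1) = linB n (m + 1) + Nat.choose n (m + 1) + linD n m := by
  unfold linD
  rw [sum_split (fun A => isl (insert (n + 1 + 1) A))]
  congr 1
  · rw [Finset.sum_congr rfl (fun A hA => isl_a n A (Finset.mem_powersetCard.1 hA).1),
      Finset.sum_add_distrib]
    simp [linB, isl]
  · exact Finset.sum_congr rfl (fun A hA => isl_b n A (Finset.mem_powersetCard.1 hA).1)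

lemma linD_eq (m : ℕ) : ∀ n, m ≤ n → linD n m =
    ∑ r ∈ Finset.range m, (linB (n - (r + 1)) (m - r) + Nat.choose (n - (r + 1)) (m - r)) + 1 := by
  induction m with
  | zero => intro n _; simp [linD_zero]
  | succ m ih =>
    intro n hn
    obtain ⟨n, rfl⟩ : ∃ k, n = k + 1 := ⟨n - 1, by omega⟩
    rw [linD_succ, ih n (by omega), Finset.sum_range_succ']
    simp only [Nat.add_sub_add_right, Nat.sub_zero, Nat.zero_add, Nat.add_sub_cancel]
    ring

theorem linB_recurrence (n m : ℕ) (hm : 1 ≤ m) (hmn : m ≤ n) :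
    linB n m = linB (n - 1) m
      + (∑ r ∈ Finset.Icc 1 (m - 1),
          (linB (n - r - 1) (m - r) + Nat.choose (n - r - 1) (m - r)))
      + 1 := by
  obtain ⟨m, rfl⟩ : ∃ k, m = k + 1 := ⟨m - 1, by omega⟩
  obtain ⟨n, rfl⟩ : ∃ k, n = k + 1 := ⟨n - 1, by omega⟩
  rw [linB_succ, linD_eq m n (by omega), Nat.add_sub_cancel, Nat.add_sub_cancel, ← add_assoc]
  congr 2
  have hI : Finset.Icc 1 m = Finset.Ico 1 (m + 1) := by
    ext x; simp only [Finset.mem_Icc, Finset.mem_Ico]; omega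
  rw [hI, Finset.sum_Ico_eq_sum_range, Nat.add_sub_cancel]
  refine Finset.sum_congr rfl fun r _ => ?_
  rw [show n + 1 - (1 + r) - 1 = n - (r + 1) by omega, show m + 1 - (1 + r) = m - r by omega]
end

section
/- For all natural numbers n and m with 1 ≤ m < n, the circular and linear island counts satisfy the recurrence 𝓓ⁿₘ = 𝓑ⁿ⁻¹ₘ + m + Σ_{j=1}^{m−1} j · ( 𝓑^{n−2−j}_{m−j} + C(n−2−j, m−j) ), where C denotes the binomial coefficient. -/
open Finset in
lemma card_mem {α : Type*} [DecidableEq α] (t : Finset α) (i : α) (hi : i ∈ t) (p : ℕ) :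
    ((powersetCard (p+1) t).filter (fun A => i ∈ A)).card = (t.card - 1).choose p := by
  have h := Finset.card_filter_add_card_filter_not (s := powersetCard (p+1) t) (fun A => i ∈ A)
  have h2 : (powersetCard (p+1) t).filter (fun A => ¬ i ∈ A) = powersetCard (p+1) (t.erase i) := by
    ext A
    simp only [mem_filter, mem_powersetCard, subset_erase]
    tauto
  rw [h2, card_powersetCard, card_powersetCard, card_erase_of_mem hi] at h
  obtain ⟨c, hc⟩ : ∃ c, t.card = c + 1 := ⟨t.card - 1, by have := card_pos.2 ⟨i, hi⟩; omega⟩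
  rw [hc] at h ⊢
  rw [Nat.choose_succ_succ] at h
  simp only [Nat.add_sub_cancel, Nat.succ_eq_add_one] at h ⊢
  omega

open Finset in
lemma island_sum {α : Type*} [DecidableEq α] (s : Finset α) (f : α → α) (hf : ∀ i, f i ≠ i) (p : ℕ) :
    ∑ A ∈ powersetCard (p+1) s, (A.filter (fun i => f i ∉ A)).card
      = ∑ i ∈ s, ((s.erase (f i)).card - 1).choose p := by
  have h1 : ∀ A ∈ powersetCard (p+1) s, (A.filter (fun i => f i ∉ A)).card
      = ∑ i ∈ s, if (i ∈ A ∧ f i ∉ A) then 1 else 0 := by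
    intro A hA
    rw [← card_filter]
    congr 1
    ext i
    have := (mem_powersetCard.1 hA).1
    simp only [mem_filter]
    constructor
    · intro h; exact ⟨this h.1, h⟩
    · intro h; exact h.2
  rw [sum_congr rfl h1, sum_comm]
  refine sum_congr rfl fun i hi => ?_
  rw [← card_filter, ← card_mem (s.erase (f i)) i (mem_erase.2 ⟨(hf i).symm, hi⟩) p]
  congr 1
  ext A
  simp only [mem_filter, mem_powersetCard, subset_erase]
  tauto

lemma circD_eq (n p : ℕ) [NeZero n] (hn : 2 ≤ n) : circD n (p+1) = n * (n-2).choose p := by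
  have : Fact (1 < n) := ⟨hn⟩
  unfold circD
  rw [island_sum _ (fun i : ZMod n => i + 1) (by intro i; simp)]
  simp [Finset.card_erase_of_mem, ZMod.card, Nat.sub_sub]

lemma linB_eq (k p : ℕ) : linB (p+k) (p+1) = k * (p+k-1).choose p := by
  unfold linB
  cases k with
  | zero => rw [Finset.powersetCard_eq_empty.2 (by simp)]; simp
  | succ k =>
    rw [island_sum _ (fun i : ℕ => i + 1) (by intro i; simp)]
    rw [← add_assoc, Finset.sum_Icc_succ_top (by omega)]
    have h : ∀ i ∈ Finset.Icc 1 (p+k), (((Finset.Icc 1 (p+k+1)).erase (i+1)).card - 1).choose p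
        = (p+k-1).choose p := by
      intro i hi
      rw [Finset.mem_Icc] at hi
      rw [Finset.card_erase_of_mem (by rw [Finset.mem_Icc]; omega)]
      simp
    rw [Finset.sum_congr rfl h, Finset.erase_eq_of_notMem (by simp)]
    simp only [Finset.sum_const, Nat.card_Icc, smul_eq_mul, Nat.add_sub_cancel]
    rcases Nat.eq_zero_or_pos (p+k) with h0 | h0
    · obtain ⟨rfl, rfl⟩ : p = 0 ∧ k = 0 := by omega
      simp
    · obtain ⟨c, hc⟩ : ∃ c, p + k = c + 1 := ⟨p+k-1, by omega⟩
      have := Nat.choose_mul_succ_eq c p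
      rw [← hc, show p + k - p = k by omega] at this
      rw [show p + k - 1 = c by omega]
      linarith

lemma conv_step (a : ℕ → ℕ) (m : ℕ) :
    ∑ j ∈ Finset.range (m+1), j * a (m+1-j)
      = ∑ j ∈ Finset.range m, j * a (m-j) + ∑ i ∈ Finset.range m, a (i+1) := by
  rw [Finset.sum_range_succ', ← Finset.sum_range_reflect (fun i => a (i+1)), zero_mul, add_zero,
    ← Finset.sum_add_distrib]
  refine Finset.sum_congr rfl fun j hj => ?_
  rw [Finset.mem_range] at hj
  rw [show m + 1 - (j+1) = m - j by omega, show m - 1 - j + 1 = m - j by omega]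
  ring

def auxA (k i : ℕ) : ℕ := linB (i+k-1) i + (i+k-1).choose i

lemma auxA_succ (k p : ℕ) : auxA k (p+1) = k * (p+k-1).choose p + (p+k).choose (p+1) := by
  unfold auxA
  rw [show p + 1 + k - 1 = p + k by omega, linB_eq]

lemma auxT (k M : ℕ) : ∑ p ∈ Finset.range M, auxA (k+1) (p+1) + 1
    = (k+1) * (M+k).choose (k+1) + (M+k+1).choose (k+1) := by
  induction M with
  | zero => simp
  | succ M ih =>
    rw [Finset.sum_range_succ, auxA_succ]
    have e1 : (M + (k+1) - 1).choose M = (M+k).choose k := by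
      rw [show M + (k+1) - 1 = M + k by omega, Nat.choose_symm_add]
    have e2 : (M + (k+1)).choose (M+1) = (M+k+1).choose k := by
      rw [show M + (k+1) = M + 1 + k by omega, Nat.choose_symm_add]
      congr 1; omega
    have e3 : (M+1+k).choose (k+1) = (M+k).choose k + (M+k).choose (k+1) := by
      rw [show M+1+k = M+k+1 by omega, Nat.choose_succ_succ]
    have e4 : (M+1+k+1).choose (k+1) = (M+k+1).choose k + (M+k+1).choose (k+1) := by
      rw [show M+1+k+1 = M+k+1+1 by omega, Nat.choose_succ_succ]
    rw [e1, e2, e3, e4]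
    linarith

lemma auxS (k m : ℕ) : ∑ j ∈ Finset.range (m+1), j * auxA k (m+1-j) + (m+1)
    = (m+1) * (m+k).choose k := by
  induction m with
  | zero => simp
  | succ m ih =>
    rw [conv_step]
    cases k with
    | zero =>
      have : ∑ i ∈ Finset.range (m+1), auxA 0 (i+1) = 0 :=
        Finset.sum_eq_zero fun i _ => by rw [auxA_succ]; simp
      rw [this]
      simp at ih ⊢
      exact ih
    | succ k =>
      have h := auxT k (m+1)
      have h2 := Nat.choose_mul_succ_eq (m+k+1) (k+1)
      rw [show m+k+1+1-(k+1) = m+1 by omega] at h2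
      rw [show m+1+k = m+k+1 by omega] at h
      rw [show m+(k+1) = m+k+1 by omega] at ih
      rw [show m+1+(k+1) = m+k+1+1 by omega]
      linarith

theorem circD_recurrence (n m : ℕ) [NeZero n] (hm : 1 ≤ m) (hmn : m < n) :
    circD n m = linB (n - 1) m + m
      + ∑ j ∈ Finset.Icc 1 (m - 1),
          j * (linB (n - 2 - j) (m - j) + Nat.choose (n - 2 - j) (m - j)) := by
  obtain ⟨p, rfl⟩ : ∃ p, m = p + 1 := ⟨m - 1, by omega⟩
  obtain ⟨k, rfl⟩ : ∃ k, n = p + k + 2 := ⟨n - p - 2, by omega⟩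
  have hs : ∑ j ∈ Finset.Icc 1 (p + 1 - 1),
      j * (linB (p+k+2 - 2 - j) (p+1 - j) + Nat.choose (p+k+2 - 2 - j) (p+1 - j))
      = ∑ j ∈ Finset.range (p+1), j * auxA k (p+1-j) := by
    have : ∀ j ∈ Finset.Icc 1 (p + 1 - 1),
      j * (linB (p+k+2 - 2 - j) (p+1 - j) + Nat.choose (p+k+2 - 2 - j) (p+1 - j))
      = j * auxA k (p+1-j) := by
      intro j hj
      rw [Finset.mem_Icc] at hj
      unfold auxA
      rw [show p+k+2-2-j = p+1-j+k-1 by omega]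
    rw [Finset.sum_congr rfl this]
    apply Finset.sum_subset
    · intro j hj
      rw [Finset.mem_Icc] at hj
      rw [Finset.mem_range]; omega
    · intro j hj hj'
      rw [Finset.mem_range] at hj
      rw [Finset.mem_Icc] at hj'
      have : j = 0 := by omega
      simp [this]
  rw [hs, circD_eq _ _ (by omega), show p+k+2-1 = p+(k+1) by omega, linB_eq,
    show p+(k+1)-1 = p+k by omega, show p+k+2-2 = p+k by omega, Nat.choose_symm_add]
  have := auxS k p
  linarith
end

section
/- For all natural numbers n and m with 1 ≤ m < n, the circular island count is obtained from the linear one by 𝓓ⁿₘ = 𝓑ⁿₘ − C(n−2, m−2), where C denotes the binomial coefficient with the convention C(a, b) = 0 when b > a, and C(n−2, m−2) is interpreted as 0 when m = 1. -/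
open Finset in
theorem count_two (S : Finset ℕ) (a b m : ℕ) (hab : a ≠ b) (ha : a ∈ S) (hb : b ∈ S) (hm : 2 ≤ m) :
    ((powersetCard m S).filter (fun A => a ∈ A ∧ b ∈ A)).card = Nat.choose (S.card - 2) (m - 2) := by
  have hc : ((S.erase a).erase b).card = S.card - 2 := by
    rw [card_erase_of_mem (by simp [hb, hab.symm]), card_erase_of_mem ha]; omega
  rw [← hc, ← card_powersetCard]
  refine card_nbij' (fun A => (A.erase a).erase b) (fun B => insert a (insert b B)) ?_ ?_ ?_ ?_
  · intro A hA
    simp only [coe_filter, Set.mem_ofPred_eq, mem_powersetCard, mem_coe] at hA ⊢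
    obtain ⟨⟨h1, h2⟩, h3, h4⟩ := hA
    refine ⟨erase_subset_erase _ (erase_subset_erase _ h1), ?_⟩
    rw [card_erase_of_mem (by simp [h4, hab.symm]), card_erase_of_mem h3]; omega
  · intro B hB
    simp only [coe_filter, Set.mem_ofPred_eq, mem_powersetCard, mem_coe] at hB ⊢
    obtain ⟨h1, h2⟩ := hB
    have hbB : b ∉ B := fun h => by simpa using h1 h
    have haB : a ∉ B := fun h => by simpa using h1 h
    refine ⟨⟨?_, ?_⟩, by simp, by simp⟩
    · intro x hx
      simp only [mem_insert] at hx
      rcases hx with rfl | rfl | hx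
      · exact ha
      · exact hb
      · exact mem_of_mem_erase (mem_of_mem_erase (h1 hx))
    · rw [card_insert_of_notMem (by simp [hab, haB]), card_insert_of_notMem hbB]; omega
  · intro A hA
    simp only [coe_filter, Set.mem_ofPred_eq, mem_powersetCard] at hA
    ext x
    simp only [mem_insert, mem_erase]
    grind
  · intro B hB
    simp only [mem_powersetCard, mem_coe] at hB
    obtain ⟨h1, h2⟩ := hB
    have hbB : b ∉ B := fun h => by simpa using h1 h
    have haB : a ∉ B := fun h => by simpa using h1 h
    ext x
    simp only [mem_insert, mem_erase]
    grind

theorem cast_inj_Icc (n i j : ℕ) (hi : i ∈ Finset.Icc 1 n) (hj : j ∈ Finset.Icc 1 n)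
    (h : (i : ZMod n) = j) : i = j := by
  simp only [Finset.mem_Icc] at hi hj
  rw [ZMod.natCast_eq_natCast_iff] at h
  have h' : i - 1 ≡ j - 1 [MOD n] := by
    apply Nat.ModEq.add_right_cancel' 1
    rwa [Nat.sub_add_cancel hi.1, Nat.sub_add_cancel hj.1]
  have := Nat.ModEq.eq_of_lt_of_lt h' (by omega) (by omega)
  omega

open Finset in
theorem image_islands (n : ℕ) (hn : 2 ≤ n) (A : Finset ℕ) (hA : A ⊆ Icc 1 n) :
    (A.filter (fun i => i + 1 ∉ A)).card =
    ((A.image (Nat.cast : ℕ → ZMod n)).filter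
      (fun i => i + 1 ∉ A.image (Nat.cast : ℕ → ZMod n))).card
      + if 1 ∈ A ∧ n ∈ A then 1 else 0 := by
  have hmem : ∀ j ∈ Icc 1 n, ((j : ZMod n) ∈ A.image (Nat.cast : ℕ → ZMod n) ↔ j ∈ A) := by
    intro j hj
    rw [mem_image]
    constructor
    · rintro ⟨i, hi, h⟩
      rwa [← cast_inj_Icc n i j (hA hi) hj h]
    · exact fun h => ⟨j, h, rfl⟩
  have key : ((A.image (Nat.cast : ℕ → ZMod n)).filter
      (fun i => i + 1 ∉ A.image (Nat.cast : ℕ → ZMod n))).card =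
      (A.filter (fun i => i + 1 ∉ A ∧ ¬ (i = n ∧ 1 ∈ A))).card := by
    rw [filter_image, card_image_of_injOn]
    · congr 1
      apply filter_congr
      intro i hi
      have hi' := mem_Icc.1 (hA hi)
      by_cases hin : i = n
      · have h1 : ((i : ZMod n) + 1) = ((1 : ℕ) : ZMod n) := by simp [hin]
        rw [h1, hmem 1 (by simp; omega)]
        have : i + 1 ∉ A := fun h => by have := mem_Icc.1 (hA h); omega
        simp [this, hin]
        grind
      · have h1 : ((i : ZMod n) + 1) = ((i + 1 : ℕ) : ZMod n) := by simp
        rw [h1, hmem (i+1) (by simp; omega)]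
        simp [hin]
    · intro i hi j hj h
      simp only [coe_filter, Set.mem_ofPred_eq] at hi hj
      exact cast_inj_Icc n i j (hA hi.1) (hA hj.1) h
  rw [key]
  have hn1 : n + 1 ∉ A := fun h => by have := mem_Icc.1 (hA h); omega
  split_ifs with h
  · rw [← card_insert_of_notMem (a := n) (by simp [h.1])]
    congr 1
    ext x
    simp only [mem_insert, mem_filter]
    grind
  · congr 1
    apply filter_congr
    grind

open Finset in
theorem circD_eq_linB_sub (n m : ℕ) [NeZero n] (hm : 1 ≤ m) (hmn : m < n) :
    (circD n m : ℤ) = (linB n m : ℤ)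
      - (if m = 1 then 0 else (Nat.choose (n - 2) (m - 2) : ℤ)) := by
  have hinj : Set.InjOn (Nat.cast : ℕ → ZMod n) (Icc 1 n : Finset ℕ) :=
    fun i hi j hj h => cast_inj_Icc n i j hi hj h
  have huniv : (Icc 1 n).image (Nat.cast : ℕ → ZMod n) = univ := by
    apply eq_univ_of_card
    rw [card_image_of_injOn hinj, ZMod.card]; simp
  have hcirc : circD n m = ∑ A ∈ powersetCard m (Icc 1 n),
      ((A.image (Nat.cast : ℕ → ZMod n)).filter
      (fun i => i + 1 ∉ A.image (Nat.cast : ℕ → ZMod n))).card := by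
    unfold circD
    symm
    refine sum_bij (fun A _ => A.image (Nat.cast : ℕ → ZMod n)) ?_ ?_ ?_ ?_
    · intro A hA
      rw [mem_powersetCard] at hA ⊢
      exact ⟨subset_univ _, by rw [card_image_of_injOn (hinj.mono (by exact_mod_cast hA.1)), hA.2]⟩
    · intro A hA B hB h
      rw [mem_powersetCard] at hA hB
      have h' := congrArg (fun s : Finset (ZMod n) => (s : Set (ZMod n))) h
      simp only [coe_image] at h'
      exact_mod_cast (hinj.image_eq_image_iff (by exact_mod_cast hA.1)
        (by exact_mod_cast hB.1)).1 h'
    · intro B hB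
      rw [mem_powersetCard] at hB
      obtain ⟨A, hA, rfl⟩ := subset_image_iff.1 (huniv ▸ hB.1)
      refine ⟨A, ?_, rfl⟩
      have hA' : A ⊆ Icc 1 n := by exact_mod_cast hA
      rw [mem_powersetCard]
      refine ⟨hA', ?_⟩
      rw [← hB.2, card_image_of_injOn (hinj.mono (by exact_mod_cast hA))]
    · intros; rfl
  have hlin : linB n m = circD n m +
      ((powersetCard m (Icc 1 n)).filter (fun A => 1 ∈ A ∧ n ∈ A)).card := by
    rw [hcirc, card_filter, ← sum_add_distrib]
    unfold linB
    exact sum_congr rfl fun A hA => image_islands n (by omega) A (mem_powersetCard.1 hA).1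
  rw [hlin]
  split_ifs with h1
  · have : (powersetCard m (Icc 1 n)).filter (fun A => 1 ∈ A ∧ n ∈ A) = ∅ := by
      apply filter_eq_empty_iff.2
      rintro A hA ⟨h2, h3⟩
      rw [mem_powersetCard, h1] at hA
      have := card_le_one.1 hA.2.le _ h2 _ h3
      omega
    simp [this]
  · rw [count_two (Icc 1 n) 1 n m (by omega) (by simp; omega) (by simp; omega) (by omega)]
    simp
end

section
/- Let G be a simple graph on a finite vertex set V partitioned as V = V₁ ⊔ V₂ such that no edge of G joins a vertex of V₁ to a vertex of V₂. Then β_G(x) = (1+x)^{|V₂|} · β_{G[V₁]}(x) + (1+x)^{|V₁|} · β_{G[V₂]}(x) as polynomials with integer coefficients; in particular, if V₁ and V₂ are both nonempty then β_G(−1) = 0. -/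
open Polynomial

/-- `islandF G S` is the quantity `f_G(S) = 2·c_G(S) + e_G(S) − |S|`, where `c_G(S)`
and `e_G(S)` are the numbers of connected components and edges of the induced
subgraph `G[S]`.  For a planar graph it equals the total number of faces of a
planar embedding of `G[S]`, summed over connected components. -/
noncomputable def islandF {V : Type*} [Fintype V] [DecidableEq V]
    (G : SimpleGraph V) (S : Finset V) : ℤ :=
  2 * Nat.card ((G.induce (S : Set V)).ConnectedComponent)
    + Nat.card ((G.induce (S : Set V)).edgeSet) - S.card

/-- The total island boundary polynomial `β_G(x) = Σ_{∅ ≠ S ⊆ V} f_G(S)·x^{|S|−1}`. -/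
noncomputable def islandPoly {V : Type*} [Fintype V] [DecidableEq V]
    (G : SimpleGraph V) : Polynomial ℤ :=
  ∑ S ∈ Finset.univ.powerset.filter (fun S : Finset V => S.Nonempty),
    Polynomial.C (islandF G S) * Polynomial.X ^ (S.card - 1)

/-- Components of a disjoint sum of graphs. -/
noncomputable def ccSumEquiv {V W : Type*} (G : SimpleGraph V) (H : SimpleGraph W) :
    (G.sum H).ConnectedComponent ≃ G.ConnectedComponent ⊕ H.ConnectedComponent where
  toFun := Quot.lift
    (Sum.elim (fun v => Sum.inl (G.connectedComponentMk v))
      (fun w => Sum.inr (H.connectedComponentMk w))) (by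
    rintro a b ⟨p⟩
    induction p with
    | nil => rfl
    | @cons u v w h p ih =>
      rw [← ih]
      rcases u with u | u <;> rcases v with v | v
      · exact congrArg Sum.inl (SimpleGraph.ConnectedComponent.sound
          (SimpleGraph.Adj.reachable (SimpleGraph.sum_adj_inl.1 h)))
      · exact absurd h (by simp)
      · exact absurd h (by simp)
      · exact congrArg Sum.inr (SimpleGraph.ConnectedComponent.sound
          (SimpleGraph.Adj.reachable (SimpleGraph.sum_adj_inr.1 h))))
  invFun := Sum.elim
    (fun c => c.map (SimpleGraph.Embedding.sumInl (G := G) (H := H)).toHom)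
    (fun c => c.map (SimpleGraph.Embedding.sumInr (G := G) (H := H)).toHom)
  left_inv := by
    rintro ⟨v | v⟩ <;> rfl
  right_inv := by
    rintro (⟨⟨v⟩⟩ | ⟨⟨v⟩⟩) <;> rfl

theorem islandF_iso {V W : Type*} [Fintype V] [DecidableEq V] [Fintype W] [DecidableEq W]
    (G : SimpleGraph V) (H : SimpleGraph W) (φ : G ≃g H) (S : Finset V) :
    islandF H (S.map φ.toEquiv.toEmbedding) = islandF G S := by
  let ψ : G.induce (S : Set V) ≃g H.induce ((S.map φ.toEquiv.toEmbedding : Finset W) : Set W) :=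
    { toEquiv := φ.toEquiv.subtypeEquiv (by intro a; simp)
      map_rel_iff' := by
        rintro ⟨a, ha⟩ ⟨b, hb⟩
        exact φ.map_adj_iff }
  unfold islandF
  rw [Nat.card_congr ψ.connectedComponentEquiv, Nat.card_congr ψ.mapEdgeSet, Finset.card_map]

theorem islandF_sum {V W : Type*} [Fintype V] [DecidableEq V] [Fintype W] [DecidableEq W]
    (G : SimpleGraph V) (H : SimpleGraph W) (S : Finset V) (T : Finset W) :
    islandF (G.sum H) (S.disjSum T) = islandF G S + islandF H T := by
  let ψ : (G.sum H).induce ((S.disjSum T : Finset (V ⊕ W)) : Set (V ⊕ W)) ≃g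
      (G.induce (S : Set V)).sum (H.induce (T : Set W)) :=
    { toFun := fun x => match x with
        | ⟨Sum.inl v, h⟩ => Sum.inl ⟨v, by simpa using h⟩
        | ⟨Sum.inr v, h⟩ => Sum.inr ⟨v, by simpa using h⟩
      invFun := fun x => match x with
        | Sum.inl v => ⟨Sum.inl v.1, by simpa using v.2⟩
        | Sum.inr v => ⟨Sum.inr v.1, by simpa using v.2⟩
      left_inv := by rintro ⟨v | v, h⟩ <;> rfl
      right_inv := by rintro (v | v) <;> rfl
      map_rel_iff' := by
        rintro ⟨a | a, ha⟩ ⟨b | b, hb⟩ <;> simp }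
  unfold islandF
  rw [Nat.card_congr (ψ.connectedComponentEquiv.trans (ccSumEquiv _ _)),
    Nat.card_congr (ψ.mapEdgeSet.trans SimpleGraph.edgeSetSumEquiv), Finset.card_disjSum,
    Nat.card_sum, Nat.card_sum]
  push_cast
  ring

theorem islandF_empty {V : Type*} [Fintype V] [DecidableEq V] (G : SimpleGraph V) :
    islandF G ∅ = 0 := by
  have : IsEmpty ↥((∅ : Finset V) : Set V) := by simp
  have h1 : IsEmpty (G.induce ((∅ : Finset V) : Set V)).ConnectedComponent :=
    ⟨fun c => c.ind (fun v => this.elim v)⟩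
  have h2 : IsEmpty (G.induce ((∅ : Finset V) : Set V)).edgeSet :=
    ⟨fun e => e.1.ind (fun a _ => this.elim a)⟩
  simp [islandF]

theorem X_mul_islandPoly {V : Type*} [Fintype V] [DecidableEq V] (G : SimpleGraph V) :
    X * islandPoly G = ∑ S : Finset V, C (islandF G S) * X ^ S.card := by
  unfold islandPoly
  rw [Finset.powerset_univ, Finset.mul_sum, Finset.sum_filter]
  refine Finset.sum_congr rfl fun S _ => ?_
  split_ifs with h
  · obtain ⟨k, hk⟩ := Nat.exists_eq_succ_of_ne_zero (Finset.card_pos.2 h).ne'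
    rw [hk, Nat.succ_sub_one, pow_succ]
    ring
  · rw [Finset.not_nonempty_iff_eq_empty.1 h, islandF_empty]
    simp

theorem islandPoly_iso {V W : Type*} [Fintype V] [DecidableEq V] [Fintype W] [DecidableEq W]
    (G : SimpleGraph V) (H : SimpleGraph W) (φ : G ≃g H) :
    islandPoly G = islandPoly H := by
  apply mul_left_cancel₀ (X_ne_zero (R := ℤ))
  rw [X_mul_islandPoly, X_mul_islandPoly]
  refine Fintype.sum_equiv φ.toEquiv.finsetCongr _ _ fun S => ?_
  rw [Equiv.finsetCongr_apply, islandF_iso, Finset.card_map]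

theorem islandPoly_sum {V W : Type*} [Fintype V] [DecidableEq V] [Fintype W] [DecidableEq W]
    (G : SimpleGraph V) (H : SimpleGraph W) :
    islandPoly (G.sum H) = (1 + X) ^ Fintype.card W * islandPoly G
      + (1 + X) ^ Fintype.card V * islandPoly H := by
  have key : ∀ (U : Type _) [Fintype U],
      (1 + X : ℤ[X]) ^ Fintype.card U = ∑ S : Finset U, X ^ S.card := by
    intro U _
    have := Fintype.sum_pow_mul_eq_add_pow U (X : ℤ[X]) 1
    simp only [one_pow, mul_one] at this
    rw [this, add_comm]
  have key' : ∀ (U : Type _) [Fintype U],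
      (1 + X : ℤ[X]) ^ Fintype.card U = ∑ S : Finset U, X ^ S.card := by
    intro U _
    have := Fintype.sum_pow_mul_eq_add_pow U (X : ℤ[X]) 1
    simp only [one_pow, mul_one] at this
    rw [this, add_comm]
  apply mul_left_cancel₀ (X_ne_zero (R := ℤ))
  rw [mul_add, mul_left_comm, mul_left_comm X, X_mul_islandPoly, X_mul_islandPoly,
    X_mul_islandPoly, key W, key' V]
  rw [Fintype.sum_equiv (Finset.sumEquiv (α := V) (β := W)).toEquiv _
    (fun p : Finset V × Finset W => C (islandF (G.sum H) (p.1.disjSum p.2)) *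
      X ^ (p.1.disjSum p.2).card)
    (fun S => by
      have : S.toLeft.disjSum S.toRight = S := Finset.toLeft_disjSum_toRight
      simp [Finset.sumEquiv, this])]
  rw [Fintype.sum_prod_type, mul_comm (∑ T : Finset W, (X : ℤ[X]) ^ T.card),
    Finset.sum_mul_sum, Finset.sum_mul_sum, ← Finset.sum_add_distrib]
  refine Finset.sum_congr rfl fun S _ => ?_
  rw [← Finset.sum_add_distrib]
  refine Finset.sum_congr rfl fun T _ => ?_
  rw [islandF_sum, Finset.card_disjSum, C_add, pow_add]
  ring

theorem islandPoly_disjUnion {V : Type*} [Fintype V] [DecidableEq V]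
    (G : SimpleGraph V) (V₁ V₂ : Finset V)
    (hdisj : Disjoint V₁ V₂) (hcover : V₁ ∪ V₂ = Finset.univ)
    (hedge : ∀ a b : V, G.Adj a b → (a ∈ V₁ ↔ b ∈ V₁)) :
    islandPoly G
        = (1 + Polynomial.X) ^ V₂.card * islandPoly (G.induce (V₁ : Set V))
          + (1 + Polynomial.X) ^ V₁.card * islandPoly (G.induce (V₂ : Set V))
      ∧ (V₁.Nonempty → V₂.Nonempty → (islandPoly G).eval (-1) = 0) := by
  have hmem : ∀ v : V, v ∉ V₁ → v ∈ V₂ := fun v h => by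
    have : v ∈ V₁ ∪ V₂ := by rw [hcover]; exact Finset.mem_univ v
    exact (Finset.mem_union.1 this).resolve_left h
  have hnot : ∀ v : V, v ∈ V₂ → v ∉ V₁ := fun v h h' => Finset.disjoint_left.1 hdisj h' h
  let φ : (G.induce (V₁ : Set V)).sum (G.induce (V₂ : Set V)) ≃g G :=
    { toEquiv := Equiv.ofBijective (Sum.elim (fun v => v.1) (fun v => v.1)) (by
        constructor
        · rintro (⟨a, ha⟩ | ⟨a, ha⟩) (⟨b, hb⟩ | ⟨b, hb⟩) h
          · simpa using h
          · obtain rfl : a = b := h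
            exact absurd ha (hnot a hb)
          · obtain rfl : a = b := h
            exact absurd hb (hnot a ha)
          · simpa using h
        · intro v
          by_cases h : v ∈ V₁
          · exact ⟨Sum.inl ⟨v, h⟩, rfl⟩
          · exact ⟨Sum.inr ⟨v, hmem v h⟩, rfl⟩)
      map_rel_iff' := by
        rintro (⟨a, ha⟩ | ⟨a, ha⟩) (⟨b, hb⟩ | ⟨b, hb⟩)
        · simp
        · simpa using fun h => hnot b hb ((hedge a b h).1 ha)
        · simpa using fun h => hnot a ha ((hedge a b h).2 hb)
        · simp }
  have main : islandPoly G
        = (1 + Polynomial.X) ^ V₂.card * islandPoly (G.induce (V₁ : Set V))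
          + (1 + Polynomial.X) ^ V₁.card * islandPoly (G.induce (V₂ : Set V)) := by
    rw [← islandPoly_iso _ _ φ, islandPoly_sum]
    simp
  refine ⟨main, fun h1 h2 => ?_⟩
  rw [main]
  simp [h1.card_pos.ne', h2.card_pos.ne', zero_pow]
end

section
/- Let T be a tree (a connected acyclic simple graph) on a finite vertex set with n ≥ 2 vertices. Then β_T(x) = (n−1)·(1+x)^{n−2} + (1+x)^{n−1} as polynomials with integer coefficients. -/
open Polynomial

theorem forest_count {W : Type*} [Fintype W] (G : SimpleGraph W) (hG : G.IsAcyclic) :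
    Nat.card G.ConnectedComponent + Nat.card G.edgeSet = Fintype.card W := by
  classical
  have hE : Nat.card G.edgeSet = G.edgeFinset.card := by
    rw [Nat.card_eq_fintype_card, SimpleGraph.edgeFinset_card]
  have hdeg : ∀ c : G.ConnectedComponent,
      ∑ v ∈ Finset.univ.filter (fun v => G.connectedComponentMk v = c), G.degree v + 2
        = 2 * (Finset.univ.filter (fun v => G.connectedComponentMk v = c)).card := by
    intro c
    have ht : (G.induce c.supp).IsTree := hG.isTree_connectedComponent c
    have h1 := ht.card_edgeFinset
    have h2 := (G.induce c.supp).sum_degrees_eq_twice_card_edges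
    have h3 : ∀ v : c.supp, (G.induce c.supp).degree v = G.degree v := by
      intro v
      apply SimpleGraph.degree_induce_of_neighborSet_subset
      intro w hw
      have hv := v.2
      rw [SimpleGraph.ConnectedComponent.mem_supp_iff] at hv ⊢
      rw [← hv]
      exact SimpleGraph.ConnectedComponent.sound (SimpleGraph.Adj.reachable hw).symm
    simp_rw [h3] at h2
    have h4 : ∑ v ∈ Finset.univ.filter (fun v => G.connectedComponentMk v = c), G.degree v
        = ∑ v : c.supp, G.degree v := by
      apply Finset.sum_subtype
      intro x
      simp
    have h5 : (Finset.univ.filter (fun v => G.connectedComponentMk v = c)).card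
        = Fintype.card c.supp := by
      symm
      apply Fintype.card_of_subtype
      intro x
      simp
    rw [h4, h5, h2, ← h1]
    ring
  have hs := Finset.sum_congr rfl (fun c (_ : c ∈ (Finset.univ : Finset G.ConnectedComponent)) => hdeg c)
  have f1 : ∑ c : G.ConnectedComponent,
      ∑ v ∈ Finset.univ.filter (fun v => G.connectedComponentMk v = c), G.degree v
      = ∑ v, G.degree v := by
    convert Finset.sum_fiberwise Finset.univ G.connectedComponentMk (fun v => G.degree v)
  have f2 : ∑ c : G.ConnectedComponent,
      (Finset.univ.filter (fun v => G.connectedComponentMk v = c)).card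
      = Fintype.card W := by
    have := Finset.card_eq_sum_card_fiberwise (s := Finset.univ) (t := Finset.univ)
      (f := G.connectedComponentMk) (fun _ _ => Finset.mem_coe.2 (Finset.mem_univ _))
    rw [Finset.card_univ] at this
    convert this.symm
  rw [Finset.sum_add_distrib, ← Finset.mul_sum, f1, f2,
    G.sum_degrees_eq_twice_card_edges] at hs
  simp only [Finset.sum_const, Finset.card_univ, smul_eq_mul] at hs
  rw [hE, Nat.card_eq_fintype_card]
  omega

theorem sum_superset {V : Type*} [Fintype V] [DecidableEq V] (A : Finset V) :
    ∑ S : Finset V, (if A ⊆ S then (X : ℤ[X]) ^ S.card else 0)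
      = X ^ A.card * (1 + X) ^ (Fintype.card V - A.card) := by
  have h := Finset.sum_pow_mul_eq_add_pow (X : ℤ[X]) 1 Aᶜ
  rw [Finset.card_compl, add_comm (X : ℤ[X]) 1] at h
  rw [← h, Finset.mul_sum, ← Finset.sum_filter]
  symm
  apply Finset.sum_bij' (fun B _ => A ∪ B) (fun S _ => S \ A)
  · intro B _; simp
  · intro S _
    rw [Finset.mem_powerset]
    intro x; simp
  · intro B hB
    rw [Finset.mem_powerset] at hB
    ext x
    have := @hB x
    simp at this ⊢
    tauto
  · intro S hS
    simp at hS
    exact Finset.union_sdiff_of_subset hS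
  · intro B hB
    rw [Finset.mem_powerset] at hB
    rw [Finset.card_union_of_disjoint, pow_add]
    · simp
    · exact Finset.disjoint_left.2 fun x hx hx' => by simpa [hx] using hB hx'

theorem islandF_forest {V : Type*} [Fintype V] [DecidableEq V]
    (T : SimpleGraph V) [DecidableRel T.Adj] (hT : T.IsAcyclic) (S : Finset V) :
    islandF T S = ∑ v : V, (if {v} ⊆ S then 1 else 0)
      - ∑ e ∈ T.edgeFinset, (if e.toFinset ⊆ S then 1 else 0) := by
  have h1 := forest_count _ (hT.induce (S : Set V))
  have h2 := congrArg Finset.card (SimpleGraph.map_edgeFinset_induce (s := (S : Set V)) (G := T))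
  rw [Finset.card_map, Finset.toFinset_coe, ← SimpleGraph.filter_edgeFinset_toFinset_subset] at h2
  have hE : Nat.card (T.induce (S : Set V)).edgeSet = (T.induce (S : Set V)).edgeFinset.card := by
    rw [Nat.card_eq_fintype_card, SimpleGraph.edgeFinset_card]
  replace hE : Nat.card (T.induce (S : Set V)).edgeSet
      = (T.edgeFinset.filter (fun e => e.toFinset ⊆ S)).card := by
    rw [hE, ← h2]
    congr!
  rw [hE] at h1
  simp only [Finset.coe_sort_coe, Fintype.card_coe] at h1
  unfold islandF
  rw [hE, Finset.sum_boole, Finset.sum_boole]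
  simp only [Finset.singleton_subset_iff, Finset.filter_univ_mem]
  omega

theorem islandPoly_tree {V : Type*} [Fintype V] [DecidableEq V]
    (T : SimpleGraph V) (hT : T.IsTree) (hn : 2 ≤ Fintype.card V) :
    islandPoly T
      = Polynomial.C ((Fintype.card V - 1 : ℕ) : ℤ)
          * (1 + Polynomial.X) ^ (Fintype.card V - 2)
        + (1 + Polynomial.X) ^ (Fintype.card V - 1) := by
  classical
  have key : X * islandPoly T = ∑ S : Finset V, C (islandF T S) * X ^ S.card := by
    unfold islandPoly
    rw [Finset.mul_sum, Finset.powerset_univ, Finset.sum_filter]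
    apply Finset.sum_congr rfl
    intro S _
    split_ifs with h
    · obtain ⟨k, hk⟩ := Nat.exists_eq_succ_of_ne_zero h.card_ne_zero
      rw [hk, Nat.succ_sub_one, pow_succ]
      ring
    · rw [Finset.not_nonempty_iff_eq_empty] at h
      subst h
      rw [islandF_forest T hT.isAcyclic]
      have : ∀ e : Sym2 V, ¬ e.toFinset = ∅ := fun e => Sym2.toFinset_ne_empty e
      simp [this]
  have hrw : ∀ S : Finset V, C (islandF T S) * (X : ℤ[X]) ^ S.card
      = ∑ v : V, (if {v} ⊆ S then X ^ S.card else 0)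
        - ∑ e ∈ T.edgeFinset, (if e.toFinset ⊆ S then X ^ S.card else 0) := by
    intro S
    rw [islandF_forest T hT.isAcyclic, C_sub, sub_mul, map_sum, map_sum, Finset.sum_mul,
      Finset.sum_mul]
    congr 1 <;>
    · apply Finset.sum_congr rfl
      intro _ _
      split_ifs <;> simp
  simp_rw [hrw] at key
  rw [Finset.sum_sub_distrib, Finset.sum_comm, Finset.sum_comm (t := T.edgeFinset)] at key
  simp_rw [sum_superset] at key
  have hc : ∑ e ∈ T.edgeFinset, (X : ℤ[X]) ^ e.toFinset.card
        * (1 + X) ^ (Fintype.card V - e.toFinset.card)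
      = ∑ e ∈ T.edgeFinset, X ^ 2 * (1 + X) ^ (Fintype.card V - 2) := by
    apply Finset.sum_congr rfl
    intro e he
    rw [Sym2.card_toFinset_of_not_isDiag e (T.not_isDiag_of_mem_edgeFinset he)]
  rw [hc] at key
  simp only [Finset.card_singleton, Finset.sum_const, Finset.card_univ, nsmul_eq_mul] at key
  have hcard := hT.card_edgeFinset
  obtain ⟨m, hm⟩ := Nat.exists_eq_add_of_le hn
  have he : T.edgeFinset.card = m + 1 := by omega
  apply mul_left_cancel₀ (X_ne_zero (R := ℤ))
  rw [key, he, hm]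
  have a1 : 2 + m - 1 = m + 1 := by omega
  have a2 : 2 + m - 2 = m := by omega
  rw [a1, a2]
  push_cast
  simp only [map_add, map_natCast, map_one]
  ring
end

section
/- Let G be a simple graph on a finite vertex set V with a vertex coloring κ : V → C, and let c, c' ∈ κ(V) be two distinct colors that are both used by κ. Let κ' be the coloring obtained from κ by recoloring every vertex of color c with the color c' (so κ'(v) = c' if κ(v) = c, and κ'(v) = κ(v) otherwise). Then β_{G,κ}(x) = x·β_{G,κ'}(x) + β_{G[V∖κ⁻¹(c)],κ}(x) + β_{G[V∖κ⁻¹(c')],κ}(x) − (1+x)·β_{G[V∖κ⁻¹({c,c'})],κ}(x) as polynomials with integer coefficients, where the colorings on induced subgraphs are the restrictions of κ. -/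
open Polynomial

/-- The colored total island boundary polynomial
`β_{G,κ}(x) = Σ_{∅ ≠ T ⊆ κ(V)} f_G(κ⁻¹(T))·x^{|T|−1}`, the sum ranging over
nonempty subsets `T` of the set of colors used by `κ`. -/
noncomputable def coloredIslandPoly {V : Type*} [Fintype V] [DecidableEq V]
    {γ : Type*} [DecidableEq γ] (G : SimpleGraph V) (κ : V → γ) : Polynomial ℤ :=
  ∑ T ∈ (Finset.univ.image κ).powerset.filter (fun T : Finset γ => T.Nonempty),
    Polynomial.C (islandF G (Finset.univ.filter (fun v => κ v ∈ T)))
      * Polynomial.X ^ (T.card - 1)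

/-- `islandF` is invariant under passing to an induced subgraph. -/
theorem islandF_induce {V : Type*} [Fintype V] [DecidableEq V] (G : SimpleGraph V)
    (s : Set V) [Fintype s] [DecidableEq s] (S : Finset s) :
    islandF (G.induce s) S = islandF G (S.map (Function.Embedding.subtype _)) := by
  have e : ((G.induce s).induce (S : Set s)) ≃g
      (G.induce ((S.map (Function.Embedding.subtype (· ∈ s)) : Finset V) : Set V)) :=
    { toEquiv := (Equiv.Set.image (Subtype.val : s → V) (S : Set s)
        Subtype.val_injective).trans (Equiv.setCongr (by ext; simp))
      map_rel_iff' := by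
        intro a b
        exact Iff.rfl }
  unfold islandF
  rw [Nat.card_congr e.connectedComponentEquiv, Nat.card_congr e.mapEdgeSet, Finset.card_map]

/-- The summand, extended by zero to the empty set. -/
noncomputable def islandTerm {γ : Type*} [DecidableEq γ] (g : Finset γ → ℤ) (T : Finset γ) :
    Polynomial ℤ :=
  if T.Nonempty then Polynomial.C (g T) * Polynomial.X ^ (T.card - 1) else 0

theorem islandTerm_insert {γ : Type*} [DecidableEq γ] (g : Finset γ → ℤ) (T : Finset γ) (a : γ)
    (ha : a ∉ T) :
    islandTerm g (insert a T) = Polynomial.C (g (insert a T)) * Polynomial.X ^ T.card := by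
  simp [islandTerm, ha]

theorem coloredIslandPoly_eq {V : Type*} [Fintype V] [DecidableEq V]
    {γ : Type*} [DecidableEq γ] (G : SimpleGraph V) (κ : V → γ) :
    coloredIslandPoly G κ = ∑ T ∈ (Finset.univ.image κ).powerset,
      islandTerm (fun T => islandF G (Finset.univ.filter (fun v => κ v ∈ T))) T := by
  unfold coloredIslandPoly islandTerm
  rw [Finset.sum_filter]

theorem coloredIslandPoly_induce {V : Type*} [Fintype V] [DecidableEq V]
    {γ : Type*} [DecidableEq γ] (G : SimpleGraph V) (κ : V → γ) (s : Set V)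
    [Fintype s] [DecidableEq s] (U : Finset γ) (hU : U ⊆ Finset.univ.image κ)
    (hs : ∀ v, v ∈ s ↔ κ v ∈ U) :
    coloredIslandPoly (G.induce s) (fun v => κ v.1) = ∑ T ∈ U.powerset,
      islandTerm (fun T => islandF G (Finset.univ.filter (fun v => κ v ∈ T))) T := by
  rw [coloredIslandPoly_eq]
  have h : Finset.univ.image (fun v : s => κ v.1) = U := by
    ext a
    simp only [Finset.mem_image, Finset.mem_univ, true_and, Subtype.exists]
    constructor
    · rintro ⟨v, hv, rfl⟩
      exact (hs v).1 hv
    · intro ha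
      obtain ⟨v, -, rfl⟩ := Finset.mem_image.1 (hU ha)
      exact ⟨v, (hs v).2 ha, rfl⟩
  rw [h]
  refine Finset.sum_congr rfl fun T hT => ?_
  have hT := Finset.mem_powerset.1 hT
  unfold islandTerm
  dsimp only
  rw [islandF_induce]
  congr 4
  ext v
  simp only [Finset.mem_map, Finset.mem_filter, Finset.mem_univ, true_and,
    Function.Embedding.subtype_apply, Subtype.exists]
  constructor
  · rintro ⟨w, hw, h1, rfl⟩
    exact h1
  · intro h1
    exact ⟨v, (hs v).2 (hT h1), h1, rfl⟩

theorem coloredIslandPoly_recolor {V : Type*} [Fintype V] [DecidableEq V]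
    {γ : Type*} [DecidableEq γ] (G : SimpleGraph V) (κ : V → γ)
    (c c' : γ) (hc : c ∈ Finset.univ.image κ) (hc' : c' ∈ Finset.univ.image κ)
    (hne : c ≠ c') :
    coloredIslandPoly G κ
      = Polynomial.X * coloredIslandPoly G (fun v => if κ v = c then c' else κ v)
        + coloredIslandPoly
            (G.induce ((Finset.univ.filter (fun v => κ v ≠ c) : Finset V) : Set V))
            (fun v => κ v.1)
        + coloredIslandPoly
            (G.induce ((Finset.univ.filter (fun v => κ v ≠ c') : Finset V) : Set V))
            (fun v => κ v.1)
        - (1 + Polynomial.X) * coloredIslandPoly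
            (G.induce ((Finset.univ.filter (fun v => κ v ≠ c ∧ κ v ≠ c') : Finset V) : Set V))
            (fun v => κ v.1) := by
  set U := Finset.univ.image κ with hUdef
  set D := (U.erase c).erase c' with hD
  have hcD : c ∉ D := by simp [hD]
  have hc'D : c' ∉ D := by simp [hD]
  have hU : U = insert c (insert c' D) := by
    rw [hD, Finset.insert_erase (Finset.mem_erase.2 ⟨hne.symm, hc'⟩), Finset.insert_erase hc]
  have hmem : ∀ v, κ v ∈ U := fun v => Finset.mem_image_of_mem κ (Finset.mem_univ v)
  have hmemD : ∀ v, κ v ∈ D ↔ κ v ≠ c ∧ κ v ≠ c' := by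
    intro v
    simp only [hD, Finset.mem_erase, hmem v, and_true]
    tauto
  have hsub1 : insert c D ⊆ U := by
    rw [hU]; exact Finset.insert_subset_insert _ (Finset.subset_insert _ _)
  have hsub2 : insert c' D ⊆ U := by
    rw [hU]; exact Finset.subset_insert _ _
  have hsub3 : D ⊆ U := (Finset.subset_insert _ _).trans hsub1
  rw [coloredIslandPoly_induce G κ _ (insert c' D) hsub2
      (by
        intro v
        simp only [Finset.coe_filter, Set.mem_setOf_eq, Finset.mem_univ, true_and,
          Finset.mem_insert, hmemD]
        by_cases h : κ v = c'
        · simp [h, hne.symm]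
        · simp [h]),
    coloredIslandPoly_induce G κ _ (insert c D) hsub1
      (by
        intro v
        simp only [Finset.coe_filter, Set.mem_setOf_eq, Finset.mem_univ, true_and,
          Finset.mem_insert, hmemD]
        by_cases h : κ v = c
        · simp [h, hne]
        · simp [h]),
    coloredIslandPoly_induce G κ _ D hsub3 (by intro v; simp [hmemD])]
  rw [coloredIslandPoly_eq G κ, coloredIslandPoly_eq G (fun v => if κ v = c then c' else κ v)]
  have himg : Finset.univ.image (fun v => if κ v = c then c' else κ v) = insert c' D := by
    ext a
    simp only [Finset.mem_image, Finset.mem_univ, true_and, Finset.mem_insert]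
    constructor
    · rintro ⟨v, rfl⟩
      have := hmemD v
      by_cases h : κ v = c
      · simp [h]
      · rw [if_neg h, this]
        tauto
    · rintro (rfl | ha)
      · obtain ⟨v, -, hv⟩ := Finset.mem_image.1 hc
        exact ⟨v, by simp [hv]⟩
      · obtain ⟨v, -, rfl⟩ := Finset.mem_image.1 (hsub3 ha)
        exact ⟨v, by simp [((hmemD v).1 ha).1]⟩
  rw [himg, ← hUdef, hU]
  have hcD2 : c ∉ insert c' D := by simp [hcD, hne]
  rw [Finset.sum_powerset_insert hcD2, Finset.sum_powerset_insert hc'D,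
    Finset.sum_powerset_insert hc'D, Finset.sum_powerset_insert hc'D,
    Finset.sum_powerset_insert hcD]
  set g : Finset γ → ℤ := fun T => islandF G (Finset.univ.filter (fun v => κ v ∈ T)) with hg
  set g' : Finset γ → ℤ := fun T => islandF G
    (Finset.univ.filter (fun v => (if κ v = c then c' else κ v) ∈ T)) with hg'
  have h1 : ∑ T ∈ D.powerset, islandTerm g' T = ∑ T ∈ D.powerset, islandTerm g T := by
    refine Finset.sum_congr rfl fun T hT => ?_
    have hT := Finset.mem_powerset.1 hT
    have : g' T = g T := by
      simp only [hg, hg']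
      congr 1
      ext v
      have a1 : c ∉ T := fun h => hcD (hT h)
      have a2 : c' ∉ T := fun h => hc'D (hT h)
      by_cases h : κ v = c <;> simp [h, a1, a2]
    simp only [islandTerm, this]
  have h2 : ∑ T ∈ D.powerset, islandTerm g (insert c (insert c' T))
      = Polynomial.X * ∑ T ∈ D.powerset, islandTerm g' (insert c' T) := by
    rw [Finset.mul_sum]
    refine Finset.sum_congr rfl fun T hT => ?_
    have hT := Finset.mem_powerset.1 hT
    have a1 : c ∉ T := fun h => hcD (hT h)
    have a2 : c' ∉ T := fun h => hc'D (hT h)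
    have : g' (insert c' T) = g (insert c (insert c' T)) := by
      simp only [hg, hg']
      congr 1
      ext v
      by_cases h : κ v = c <;> simp [h]
    rw [islandTerm_insert _ _ _ a2, islandTerm_insert _ _ _ (by simp [a1, hne]), this,
      Finset.card_insert_of_notMem a2]
    ring
  rw [h1, h2]
  ring
end

section
/- Let G be a connected simple graph on a finite vertex set V containing an edge {v, w} (a clean short circuit), and suppose there is a path v = x₀, x₁, …, x_{k−1} = w in G with k ≥ 3 distinct vertices such that every internal vertex x₁, …, x_{k−2} has degree exactly 2 in G (its only neighbors are its two neighbors on the path). If |V| − (k−2) ≥ 3, then the total island count vanishes: β_G(−1) = 0. -/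
open Polynomial

open Finset in
lemma toggle_sum {V : Type*} [Fintype V] [DecidableEq V] (z : V) (h : Finset V → ℤ)
    (hz : ∀ S, z ∉ S → h (insert z S) = h S) :
    ∑ S : Finset V, (-1 : ℤ) ^ S.card * h S = 0 := by
  have h1 : (Finset.univ : Finset (Finset V)) = (insert z (Finset.univ.erase z)).powerset := by
    rw [Finset.insert_erase (Finset.mem_univ z), Finset.powerset_univ]
  rw [h1, Finset.sum_powerset_insert (Finset.notMem_erase z _), ← Finset.sum_add_distrib]
  apply Finset.sum_eq_zero
  intro S hS
  have hzS : z ∉ S := fun hh => Finset.notMem_erase z _ (Finset.mem_powerset.1 hS hh)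
  rw [Finset.card_insert_of_notMem hzS, hz S hzS]
  ring

/-- Functions locally constant on `X`. -/
def locConst {V : Type*} (G : SimpleGraph V) (X : Set V) : Submodule ℚ (V → ℚ) where
  carrier := {f | ∀ a ∈ X, ∀ b ∈ X, G.Adj a b → f a = f b}
  add_mem' := by
    intro f g hf hg a ha b hb hab
    simp [hf a ha b hb hab, hg a ha b hb hab]
  zero_mem' := by intro a _ b _ _; rfl
  smul_mem' := by
    intro c f hf a ha b hb hab
    simp [hf a ha b hb hab]

lemma mem_locConst {V : Type*} (G : SimpleGraph V) (X : Set V) (f : V → ℚ) :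
    f ∈ locConst G X ↔ ∀ a ∈ X, ∀ b ∈ X, G.Adj a b → f a = f b := Iff.rfl

open Classical in
noncomputable def locEquiv {V : Type*} (G : SimpleGraph V) (X : Set V) :
    locConst G X ≃ₗ[ℚ] ((G.induce X).ConnectedComponent → ℚ) × ((Xᶜ : Set V) → ℚ) where
  toFun f := (fun c => c.recOn (fun x => f.1 x.1) (by
      intro x y p _
      simp only [eq_rec_constant]
      induction p with
      | nil => rfl
      | cons hadj p ih =>
        rename_i hp
        rw [← ih (by simpa using hp.of_cons)]
        exact f.2 _ (Subtype.property _) _ (Subtype.property _) hadj), fun x => f.1 x.1)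
  invFun g := ⟨fun x => if hx : x ∈ X then g.1 ((G.induce X).connectedComponentMk ⟨x, hx⟩)
      else g.2 ⟨x, hx⟩, by
    intro a ha b hb hab
    simp only [ha, hb, dif_pos]
    refine congrArg g.1 (SimpleGraph.ConnectedComponent.sound (SimpleGraph.Adj.reachable ?_))
    exact hab⟩
  map_add' f g := by
    ext c
    · induction c using SimpleGraph.ConnectedComponent.ind; rfl
    · rfl
  map_smul' r f := by
    ext c
    · induction c using SimpleGraph.ConnectedComponent.ind; rfl
    · rfl
  left_inv f := by
    ext x
    by_cases hx : x ∈ X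
    · simp only [hx, dif_pos]; rfl
    · simp only [hx, dif_neg, not_false_eq_true]
  right_inv g := by
    ext c
    · induction c using SimpleGraph.ConnectedComponent.ind with
      | h v =>
        show (if hx : v.1 ∈ X then _ else _) = _
        rw [dif_pos v.2]
    · have : c.1 ∉ X := c.2
      simp [this]

lemma finrank_locConst {V : Type*} [Fintype V] [DecidableEq V] (G : SimpleGraph V)
    (S : Finset V) :
    Module.finrank ℚ (locConst G (S : Set V)) + S.card =
      Nat.card ((G.induce (S : Set V)).ConnectedComponent) + Fintype.card V := by
  classical
  rw [(locEquiv G (S : Set V)).finrank_eq, Module.finrank_prod, Module.finrank_pi,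
    Module.finrank_pi, Nat.card_eq_fintype_card]
  have h := Fintype.card_compl_set (S : Set V)
  have h2 : Fintype.card (S : Set V) = S.card := by simp
  have h3 := Finset.card_le_univ S
  omega

lemma glue {V : Type*} [Fintype V] [DecidableEq V] (G : SimpleGraph V) (A B : Finset V)
    (hAB : ∀ a ∈ A, ∀ b ∈ B, G.Adj a b → a ∈ B ∨ b ∈ A)
    (hcl : ∀ a ∈ A ∩ B, ∀ b ∈ A ∩ B, a ≠ b → G.Adj a b) :
    Nat.card ((G.induce ((A ∪ B : Finset V) : Set V)).ConnectedComponent) +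
    Nat.card ((G.induce ((A ∩ B : Finset V) : Set V)).ConnectedComponent) =
    Nat.card ((G.induce (A : Set V)).ConnectedComponent) +
    Nat.card ((G.induce (B : Set V)).ConnectedComponent) := by
  have hinf : locConst G (A : Set V) ⊓ locConst G (B : Set V)
      = locConst G ((A ∪ B : Finset V) : Set V) := by
    ext f
    simp only [Submodule.mem_inf, mem_locConst, Finset.mem_coe, Finset.mem_union]
    constructor
    · rintro ⟨h1, h2⟩ a ha b hb hab
      rcases ha with ha | ha <;> rcases hb with hb | hb
      · exact h1 a ha b hb hab
      · rcases hAB a ha b hb hab with h | h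
        · exact h2 a h b hb hab
        · exact h1 a ha b h hab
      · rcases hAB b hb a ha hab.symm with h | h
        · exact h2 a ha b h hab
        · exact h1 a h b hb hab
      · exact h2 a ha b hb hab
    · intro h
      exact ⟨fun a ha b hb => h a (Or.inl ha) b (Or.inl hb),
        fun a ha b hb => h a (Or.inr ha) b (Or.inr hb)⟩
  have hsup : locConst G (A : Set V) ⊔ locConst G (B : Set V)
      = locConst G ((A ∩ B : Finset V) : Set V) := by
    apply le_antisymm
    · apply sup_le
      · intro f hf a ha b hb
        exact hf a (Finset.mem_inter.1 ha).1 b (Finset.mem_inter.1 hb).1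
      · intro f hf a ha b hb
        exact hf a (Finset.mem_inter.1 ha).2 b (Finset.mem_inter.1 hb).2
    · intro f hf
      have hc : ∃ c, ∀ a ∈ A ∩ B, f a = c := by
        by_cases hne : (A ∩ B).Nonempty
        · obtain ⟨a0, ha0⟩ := hne
          refine ⟨f a0, fun a ha => ?_⟩
          by_cases h : a = a0
          · rw [h]
          · exact hf a ha a0 ha0 (hcl a ha a0 ha0 h)
        · exact ⟨0, fun a ha => absurd ⟨a, ha⟩ hne⟩
      obtain ⟨c, hc⟩ := hc
      rw [Submodule.mem_sup]
      refine ⟨fun x => if x ∈ A then c else f x, ?_, fun x => if x ∈ A then f x - c else 0, ?_, ?_⟩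
      · intro a ha b hb _
        have ha' : a ∈ A := ha
        have hb' : b ∈ A := hb
        simp [ha', hb']
      · have key : ∀ a ∈ B, (if a ∈ A then f a - c else 0) = 0 := by
          intro a ha
          by_cases h : a ∈ A
          · simp [h, hc a (Finset.mem_inter.2 ⟨h, ha⟩)]
          · simp [h]
        intro a ha b hb _
        show (if a ∈ A then f a - c else 0) = (if b ∈ A then f b - c else 0)
        rw [key a ha, key b hb]
      · ext x
        by_cases h : x ∈ A <;> simp [h]
  have h := Submodule.finrank_sup_add_finrank_inf_eq (locConst G (A : Set V)) (locConst G (B : Set V))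
  rw [hinf, hsup] at h
  have e1 := finrank_locConst G A
  have e2 := finrank_locConst G B
  have e3 := finrank_locConst G (A ∪ B)
  have e4 := finrank_locConst G (A ∩ B)
  have e5 := Finset.card_union_add_card_inter A B
  omega

open Classical in
lemma card_edges {V : Type*} [Fintype V] [DecidableEq V] (G : SimpleGraph V) (S : Finset V) :
    (Nat.card ((G.induce (S : Set V)).edgeSet) : ℤ) =
      ∑ e : Sym2 V, if e ∈ G.edgeSet ∧ ∀ x ∈ e, x ∈ S then (1 : ℤ) else 0 := by
  rw [Finset.sum_boole]
  congr 1
  have himg : Sym2.map (Subtype.val : ((S : Set V) : Type _) → V) '' (G.induce (S : Set V)).edgeSet =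
      {e | e ∈ G.edgeSet ∧ ∀ x ∈ e, x ∈ S} := by
    ext e
    induction e using Sym2.ind with
    | _ a b =>
      constructor
      · rintro ⟨e', he', h⟩
        induction e' using Sym2.ind with
        | _ x y =>
          rw [← h]
          refine ⟨by simpa using he', ?_⟩
          intro z hz
          simp only [Sym2.map_mk, Sym2.mem_iff] at hz
          rcases hz with rfl | rfl
          · exact x.2
          · exact y.2
      · rintro ⟨h1, h2⟩
        refine ⟨s(⟨a, h2 a (by simp)⟩, ⟨b, h2 b (by simp)⟩), by simpa using h1, by simp⟩
  rw [← Set.ncard_coe_finset, Finset.coe_filter]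
  simp only [Finset.mem_univ, true_and]
  rw [← himg, Set.ncard_image_of_injective _ (Sym2.map.injective Subtype.val_injective)]
  rfl

lemma sum_card_zero {V : Type*} [Fintype V] [DecidableEq V] (hn : 2 ≤ Fintype.card V) :
    ∑ S : Finset V, (-1 : ℤ) ^ S.card * (S.card : ℤ) = 0 := by
  have h1 : ∀ S : Finset V, (S.card : ℤ) = ∑ x : V, if x ∈ S then (1 : ℤ) else 0 := by
    intro S
    simp
  calc _ = ∑ S : Finset V, ∑ x : V, (-1 : ℤ) ^ S.card * (if x ∈ S then (1 : ℤ) else 0) := by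
        refine Finset.sum_congr rfl fun S _ => ?_
        rw [← Finset.mul_sum, ← h1 S]
    _ = 0 := by
        rw [Finset.sum_comm]
        refine Finset.sum_eq_zero fun x _ => ?_
        have : Nontrivial V := Fintype.one_lt_card_iff_nontrivial.1 hn
        obtain ⟨z, hz⟩ := exists_ne x
        exact toggle_sum z (fun S => if x ∈ S then (1 : ℤ) else 0)
          (fun S _ => by simp [Finset.mem_insert, hz.symm])

lemma sum_edges_zero {V : Type*} [Fintype V] [DecidableEq V] (G : SimpleGraph V)
    (hn : 3 ≤ Fintype.card V) :
    ∑ S : Finset V, (-1 : ℤ) ^ S.card * (Nat.card ((G.induce (S : Set V)).edgeSet) : ℤ) = 0 := by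
  classical
  simp_rw [card_edges, Finset.mul_sum]
  rw [Finset.sum_comm]
  refine Finset.sum_eq_zero fun e _ => ?_
  have hz : ∃ z, z ∉ e := by
    induction e using Sym2.ind with
    | _ a b =>
      obtain ⟨z, hz⟩ : ∃ z, z ∉ ({a, b} : Finset V) := by
        by_contra! hcon
        have := Finset.card_le_card (fun x _ => hcon x : Finset.univ ⊆ ({a, b} : Finset V))
        have h2 := Finset.card_le_two (a := a) (b := b)
        rw [Finset.card_univ] at this
        omega
      exact ⟨z, by simpa using hz⟩
  obtain ⟨z, hz⟩ := hz
  refine toggle_sum z (fun S => if e ∈ G.edgeSet ∧ ∀ x ∈ e, x ∈ S then (1 : ℤ) else 0)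
    (fun S _ => ?_)
  have : (∀ x ∈ e, x ∈ insert z S) ↔ ∀ x ∈ e, x ∈ S := by
    refine forall₂_congr fun x hx => ?_
    have : x ≠ z := fun h => hz (h ▸ hx)
    simp [this]
  simp only [this]

theorem islandCount_clean_short_circuit {V : Type*} [Fintype V] [DecidableEq V]
    (G : SimpleGraph V) (hconn : G.Connected)
    (v w : V) (hvw : G.Adj v w)
    (k : ℕ) (hk : 3 ≤ k) (p : ℕ → V)
    (hinj : ∀ i j : ℕ, i < k → j < k → p i = p j → i = j)
    (h0 : p 0 = v) (hlast : p (k - 1) = w)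
    (hpath : ∀ i : ℕ, i + 1 < k → G.Adj (p i) (p (i + 1)))
    (hdeg : ∀ i : ℕ, 1 ≤ i → i ≤ k - 2 →
      ∀ u : V, G.Adj (p i) u → u = p (i - 1) ∨ u = p (i + 1))
    (hcard : 3 ≤ Fintype.card V - (k - 2)) :
    (islandPoly G).eval (-1) = 0 := by
  classical
  have hn : 3 ≤ Fintype.card V := by omega
  set c : Finset V → ℤ := fun S => (Nat.card ((G.induce (S : Set V)).ConnectedComponent) : ℤ)
    with hc
  -- the inner vertices, and the whole path
  set I : Finset V := (Finset.Icc 1 (k - 2)).image p with hI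
  set P : Finset V := (Finset.range k).image p with hP
  have hPI : P = I ∪ {v, w} := by
    ext x
    simp only [hP, hI, Finset.mem_image, Finset.mem_range, Finset.mem_union, Finset.mem_Icc,
      Finset.mem_insert, Finset.mem_singleton]
    constructor
    · rintro ⟨i, hi, rfl⟩
      by_cases hi0 : i = 0
      · subst hi0; exact Or.inr (Or.inl h0)
      · by_cases hi1 : i = k - 1
        · subst hi1; exact Or.inr (Or.inr hlast)
        · exact Or.inl ⟨i, by omega, rfl⟩
    · rintro (⟨i, hi, rfl⟩ | rfl | rfl)
      · exact ⟨i, by omega, rfl⟩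
      · exact ⟨0, by omega, h0⟩
      · exact ⟨k - 1, by omega, hlast⟩
  have hvI : v ∉ I := by
    simp only [hI, Finset.mem_image, Finset.mem_Icc, not_exists, not_and]
    intro i hi h
    have := hinj i 0 (by omega) (by omega) (h.trans h0.symm)
    omega
  have hwI : w ∉ I := by
    simp only [hI, Finset.mem_image, Finset.mem_Icc, not_exists, not_and]
    intro i hi h
    have := hinj i (k - 1) (by omega) (by omega) (h.trans hlast.symm)
    omega
  have hIadj : ∀ x ∈ I, ∀ u, G.Adj x u → u ∈ P := by
    intro x hx u hu
    simp only [hI, Finset.mem_image, Finset.mem_Icc] at hx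
    obtain ⟨i, hi, rfl⟩ := hx
    simp only [hP, Finset.mem_image, Finset.mem_range]
    rcases hdeg i hi.1 hi.2 u hu with h | h
    · exact ⟨i - 1, by omega, h.symm⟩
    · exact ⟨i + 1, by omega, h.symm⟩
  obtain ⟨z, hz⟩ : ∃ z, z ∉ P := by
    by_contra! hcon
    have h1 := Finset.card_le_card (fun x _ => hcon x : Finset.univ ⊆ P)
    have h2 : P.card ≤ k := by simpa using Finset.card_image_le (s := Finset.range k) (f := p)
    rw [Finset.card_univ] at h1
    omega
  have hx1 : p 1 ∈ I := Finset.mem_image_of_mem p (Finset.mem_Icc.2 ⟨le_rfl, by omega⟩)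
  have hglue : ∀ S, c S = c (S \ I) + c (S ∩ P) - c (S ∩ {v, w}) := by
    intro S
    have hU : (S \ I) ∪ (S ∩ P) = S := by
      ext x
      simp only [hPI, Finset.mem_union, Finset.mem_sdiff, Finset.mem_inter]
      tauto
    have hN : (S \ I) ∩ (S ∩ P) = S ∩ {v, w} := by
      ext x
      simp only [hPI, Finset.mem_union, Finset.mem_sdiff, Finset.mem_inter, Finset.mem_insert,
        Finset.mem_singleton]
      constructor
      · tauto
      · rintro ⟨h1, rfl | rfl⟩ <;> tauto
    have h := glue G (S \ I) (S ∩ P) (by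
      intro a ha b hb hab
      rw [Finset.mem_sdiff] at ha
      rw [Finset.mem_inter] at hb
      by_cases hbI : b ∈ I
      · exact Or.inl (Finset.mem_inter.2 ⟨ha.1, hIadj b hbI a hab.symm⟩)
      · exact Or.inr (Finset.mem_sdiff.2 ⟨hb.1, hbI⟩)) (by
      rw [hN]
      intro a ha b hb hab
      simp only [Finset.mem_inter, Finset.mem_insert, Finset.mem_singleton] at ha hb
      rcases ha with ⟨_, rfl | rfl⟩ <;> rcases hb with ⟨_, rfl | rfl⟩
      · exact absurd rfl hab
      · exact hvw
      · exact hvw.symm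
      · exact absurd rfl hab)
    rw [hU, hN] at h
    simp only [hc]
    omega
  have hcsum : ∑ S : Finset V, (-1 : ℤ) ^ S.card * c S = 0 := by
    have t1 := toggle_sum (p 1) (fun S => c (S \ I)) (fun S _ => by
      simp only [Finset.insert_sdiff_of_mem S hx1])
    have t2 := toggle_sum z (fun S => c (S ∩ P)) (fun S _ => by
      simp only [Finset.insert_inter_of_notMem hz])
    have hz2 : z ∉ ({v, w} : Finset V) := fun h => hz (hPI ▸ Finset.mem_union_right _ h)
    have t3 := toggle_sum z (fun S => c (S ∩ {v, w})) (fun S _ => by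
      simp only [Finset.insert_inter_of_notMem hz2])
    calc _ = ∑ S : Finset V, ((-1 : ℤ) ^ S.card * c (S \ I) + (-1 : ℤ) ^ S.card * c (S ∩ P)
            - (-1 : ℤ) ^ S.card * c (S ∩ {v, w})) := by
          refine Finset.sum_congr rfl fun S _ => ?_
          rw [hglue S]
          ring
      _ = 0 := by
          rw [Finset.sum_sub_distrib, Finset.sum_add_distrib]
          rw [t1, t2, t3]
          norm_num
  have hf : ∑ S : Finset V, (-1 : ℤ) ^ S.card * islandF G S = 0 := by
    have e1 := sum_edges_zero G hn
    have e2 := sum_card_zero (V := V) (by omega)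
    calc _ = ∑ S : Finset V, (2 * ((-1 : ℤ) ^ S.card * c S)
            + (-1 : ℤ) ^ S.card * (Nat.card ((G.induce (S : Set V)).edgeSet) : ℤ)
            - (-1 : ℤ) ^ S.card * (S.card : ℤ)) := by
          refine Finset.sum_congr rfl fun S _ => ?_
          simp only [islandF, hc]
          ring
      _ = 0 := by
          rw [Finset.sum_sub_distrib, Finset.sum_add_distrib, ← Finset.mul_sum, hcsum, e1, e2]
          norm_num
  have hempty : islandF G ∅ = 0 := by
    have : IsEmpty ((∅ : Finset V) : Set V) := by simp
    have h1 := finrank_locConst G ∅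
    have h2 : IsEmpty ((G.induce ((∅ : Finset V) : Set V)).ConnectedComponent) :=
      ⟨fun c => c.ind (fun x => this.elim x)⟩
    have h3 : IsEmpty ((G.induce ((∅ : Finset V) : Set V)).edgeSet) :=
      ⟨fun e => by
        obtain ⟨e, he⟩ := e
        induction e using Sym2.ind with
        | _ a b => exact this.elim a⟩
    simp only [islandF, Nat.card_of_isEmpty]
    simp
  rw [islandPoly, Polynomial.eval_finsetSum]
  simp only [Polynomial.eval_mul, Polynomial.eval_C, Polynomial.eval_pow, Polynomial.eval_X]
  rw [Finset.powerset_univ, Finset.sum_filter, ← neg_eq_zero]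
  refine Eq.trans ?_ hf
  rw [← Finset.sum_neg_distrib]
  refine Finset.sum_congr rfl fun S _ => ?_
  by_cases hS : S.Nonempty
  · rw [if_pos hS]
    obtain ⟨m, hm⟩ := Nat.exists_eq_succ_of_ne_zero (Finset.card_ne_zero.2 hS)
    rw [hm, Nat.succ_sub_one, pow_succ]
    ring
  · rw [if_neg hS, Finset.not_nonempty_iff_eq_empty.1 hS, hempty]
    simp
end

section
/- The total island boundary polynomial detects trees: a simple graph G on a finite vertex set with n ≥ 2 vertices is a tree (connected and acyclic) if and only if β_G(x) = (1+x)^{n−1} + (n−1)·(1+x)^{n−2} as polynomials with integer coefficients. -/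
open Polynomial

namespace IslandAux

open Finset

/-- number of induced edges, as a filter cardinality -/
lemma card_edge_induce {V : Type*} [Fintype V] [DecidableEq V] (G : SimpleGraph V)
    [DecidableRel G.Adj] (S : Finset V) :
    Nat.card (G.induce (S : Set V)).edgeSet = #{e ∈ G.edgeFinset | e.toFinset ⊆ S} := by
  classical
  rw [SimpleGraph.card_filter_edgeFinset_toFinset_subset, Nat.card_eq_fintype_card,
    SimpleGraph.card_edgeSet]

lemma forest_card {W : Type*} [Fintype W] (H : SimpleGraph W) (h : H.IsAcyclic) :
    Nat.card H.ConnectedComponent + Nat.card H.edgeSet = Fintype.card W := by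
  classical
  have h1 : Fintype.card W = ∑ c : H.ConnectedComponent, #{v : W | H.connectedComponentMk v = c} := by
    rw [← Finset.card_univ]
    exact Finset.card_eq_sum_card_fiberwise (fun _ _ => by simp)
  have h2 : #H.edgeFinset = ∑ c : H.ConnectedComponent,
      #{e ∈ H.edgeFinset | H.connectedComponentMk e.out.1 = c} :=
    Finset.card_eq_sum_card_fiberwise (fun _ _ => by simp)
  have h3 : ∀ c : H.ConnectedComponent, #{v : W | H.connectedComponentMk v = c}
      = #{e ∈ H.edgeFinset | H.connectedComponentMk e.out.1 = c} + 1 := by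
    intro c
    have hS : ((({v : W | H.connectedComponentMk v = c} : Finset W)) : Set W) = c.supp := by
      ext v; simp
    have ht : (H.induce ((({v : W | H.connectedComponentMk v = c} : Finset W)) : Set W)).IsTree := by
      rw [hS]
      exact h.isTree_connectedComponent c
    have hc := (SimpleGraph.isTree_iff_connected_and_card.1 ht).2
    rw [card_edge_induce] at hc
    have hcard : Nat.card ((({v : W | H.connectedComponentMk v = c} : Finset W)) : Set W)
        = #{v : W | H.connectedComponentMk v = c} := by
      rw [Nat.card_coe_set_eq, Set.ncard_coe_finset]
    rw [hcard] at hc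
    rw [← hc]
    congr 2
    refine Finset.filter_congr fun e he => ?_
    have hmem := Sym2.out_fst_mem e
    revert hmem
    generalize e.out.1 = w
    induction e with
    | _ x y =>
      have hxy : H.Adj x y := by simpa using he
      have hq : H.connectedComponentMk x = H.connectedComponentMk y :=
        SimpleGraph.ConnectedComponent.eq.2 hxy.reachable
      intro hw
      rw [Sym2.mem_iff] at hw
      have hw' : H.connectedComponentMk w = H.connectedComponentMk x := by
        rcases hw with rfl | rfl
        · rfl
        · exact hq.symm
      rw [hw']
      simp [Finset.subset_iff, ← hq]
  rw [Nat.card_eq_fintype_card, Nat.card_eq_fintype_card, SimpleGraph.card_edgeSet, h1, h2,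
    Finset.sum_congr rfl (fun c _ => h3 c), Finset.sum_add_distrib]
  simp [add_comm]

lemma sum_superset {V : Type*} [Fintype V] [DecidableEq V] (T : Finset V) :
    ∑ S : Finset V, (if T ⊆ S then (X : ℤ[X]) ^ #S else 0)
      = X ^ #T * (1 + X) ^ (Fintype.card V - #T) := by
  have h := Finset.prod_add (fun _ : V => (X : ℤ[X])) (fun v => if v ∈ T then 0 else 1) univ
  have h2 : ∏ v : V, ((X : ℤ[X]) + if v ∈ T then 0 else 1)
      = X ^ #T * (1 + X) ^ (Fintype.card V - #T) := by
    have : ∀ v : V, ((X : ℤ[X]) + if v ∈ T then 0 else 1) = if v ∈ T then X else 1 + X := by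
      intro v; split_ifs <;> ring
    simp only [this]
    rw [Finset.prod_ite, Finset.prod_const, Finset.prod_const, Finset.filter_not,
      Finset.filter_mem_eq_inter, Finset.univ_inter, Finset.card_sdiff_of_subset (subset_univ _),
      Finset.card_univ]
  rw [← h2, h, Finset.powerset_univ]
  refine Finset.sum_congr rfl fun S _ => ?_
  rw [Finset.prod_const]
  split_ifs with hS
  · rw [Finset.prod_eq_one, mul_one]
    intro v hv
    rw [if_neg]
    intro hT
    exact (mem_sdiff.1 hv).2 (hS hT)
  · obtain ⟨v, hv, hvS⟩ := Finset.not_subset.1 hS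
    rw [Finset.prod_eq_zero (i := v) (by simp [hvS]) (by simp [hv]), mul_zero]

lemma forest_poly {V : Type*} [Fintype V] [DecidableEq V] (G : SimpleGraph V)
    (hn : 2 ≤ Fintype.card V) :
    ∑ S : Finset V, C ((#S : ℤ) - Nat.card (G.induce (S : Set V)).edgeSet) * X ^ #S
      = C (Fintype.card V : ℤ) * (X * (1 + X) ^ (Fintype.card V - 1))
        - C (Nat.card G.edgeSet : ℤ) * (X ^ 2 * (1 + X) ^ (Fintype.card V - 2)) := by
  classical
  have hv : ∑ S : Finset V, C (#S : ℤ) * X ^ #S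
      = C (Fintype.card V : ℤ) * (X * (1 + X) ^ (Fintype.card V - 1)) := by
    have h : ∀ S : Finset V, C (#S : ℤ) * X ^ #S
        = ∑ v : V, (if {v} ⊆ S then (X : ℤ[X]) ^ #S else 0) := by
      intro S
      simp [← Finset.sum_filter]
    simp only [h]
    rw [Finset.sum_comm]
    simp only [sum_superset]
    simp
  have he : ∑ S : Finset V, C (Nat.card (G.induce (S : Set V)).edgeSet : ℤ) * X ^ #S
      = C (Nat.card G.edgeSet : ℤ) * (X ^ 2 * (1 + X) ^ (Fintype.card V - 2)) := by
    have h : ∀ S : Finset V, C (Nat.card (G.induce (S : Set V)).edgeSet : ℤ) * X ^ #S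
        = ∑ e ∈ G.edgeFinset, (if e.toFinset ⊆ S then (X : ℤ[X]) ^ #S else 0) := by
      intro S
      rw [card_edge_induce, ← Finset.sum_filter]
      simp
    simp only [h]
    rw [Finset.sum_comm]
    simp only [sum_superset]
    rw [Finset.sum_congr rfl (g := fun _ => X ^ 2 * (1 + X) ^ (Fintype.card V - 2))]
    · rw [Finset.sum_const, Nat.card_eq_fintype_card, SimpleGraph.card_edgeSet]
      simp
    · intro e he
      rw [Sym2.card_toFinset_of_not_isDiag e (G.not_isDiag_of_mem_edgeFinset he)]
  rw [← hv, ← he, ← Finset.sum_sub_distrib]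
  refine Finset.sum_congr rfl fun S _ => ?_
  rw [C_sub, sub_mul]

lemma islandF_acyclic {V : Type*} [Fintype V] [DecidableEq V] (G : SimpleGraph V) (S : Finset V)
    (h : (G.induce (S : Set V)).IsAcyclic) :
    islandF G S = (#S : ℤ) - Nat.card (G.induce (S : Set V)).edgeSet := by
  have := forest_card _ h
  have h2 : Fintype.card (S : Set V) = #S := by simp
  unfold islandF
  omega

lemma X_mul_islandPoly {V : Type*} [Fintype V] [DecidableEq V] (G : SimpleGraph V) :
    X * islandPoly G = ∑ S : Finset V, C (islandF G S) * X ^ #S := by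
  unfold islandPoly
  rw [Finset.mul_sum, Finset.powerset_univ, Finset.sum_filter]
  refine Finset.sum_congr rfl fun S _ => ?_
  split_ifs with hS
  · have : #S = (#S - 1) + 1 := by have := hS.card_pos; omega
    conv_rhs => rw [this, pow_succ]
    ring
  · rw [Finset.not_nonempty_iff_eq_empty] at hS
    subst hS
    have h0 : islandF G ∅ = 0 := by
      rw [islandF_acyclic]
      · simp
      · have : IsEmpty ((∅ : Finset V) : Set V) := by simp
        exact SimpleGraph.IsAcyclic.of_subsingleton
    simp [h0]

end IslandAux

theorem islandPoly_detects_trees {V : Type*} [Fintype V] [DecidableEq V]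
    (G : SimpleGraph V) (hn : 2 ≤ Fintype.card V) :
    G.IsTree ↔
      islandPoly G
        = (1 + Polynomial.X) ^ (Fintype.card V - 1)
          + Polynomial.C ((Fintype.card V - 1 : ℕ) : ℤ)
              * (1 + Polynomial.X) ^ (Fintype.card V - 2) := by
  classical
  set n := Fintype.card V with hnn
  have hP := IslandAux.forest_poly G hn
  have hX := IslandAux.X_mul_islandPoly G
  obtain ⟨k, hk⟩ : ∃ k, n = k + 2 := ⟨n - 2, by omega⟩
  have e1 : n - 1 = k + 1 := by omega
  have e2 : n - 2 = k := by omega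
  rw [← hnn, e1, e2, hk] at hP
  rw [e1, e2]
  constructor
  · intro h
    have hm := h.card_edgeFinset
    have hm' : Nat.card G.edgeSet = k + 1 := by
      rw [Nat.card_eq_fintype_card, SimpleGraph.card_edgeSet]; omega
    have hs : ∑ S : Finset V, C (islandF G S) * X ^ S.card = 
        ∑ S : Finset V, C ((S.card : ℤ) - Nat.card (G.induce (S : Set V)).edgeSet) * X ^ S.card :=
      Finset.sum_congr rfl fun S _ => by rw [IslandAux.islandF_acyclic G S (h.isAcyclic.induce _)]
    rw [hs, hP, hm'] at hX
    apply mul_left_cancel₀ (X_ne_zero : (X : ℤ[X]) ≠ 0)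
    rw [hX]
    push_cast
    simp only [map_add, map_one, map_natCast, map_ofNat]
    ring
  · intro h
    have hm : Nat.card G.edgeSet = k + 1 := by
      have c1 : (X * islandPoly G).coeff 2 = ((k : ℤ) + 1) * (k + 1) := by
        rw [h, show 2 = 1 + 1 from rfl, coeff_X_mul, coeff_add, coeff_C_mul,
          coeff_one_add_X_pow, coeff_one_add_X_pow]
        push_cast [Nat.choose_one_right]
        ring
      have c2 : (X * islandPoly G).coeff 2 = ((k : ℤ) + 2) * (k + 1) - Nat.card G.edgeSet := by
        have hs : (X * islandPoly G).coeff 2 = (∑ S : Finset V,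
            C ((S.card : ℤ) - Nat.card (G.induce (S : Set V)).edgeSet) * X ^ S.card).coeff 2 := by
          rw [hX, finsetSum_coeff, finsetSum_coeff]
          refine Finset.sum_congr rfl fun S _ => ?_
          rw [coeff_C_mul_X_pow, coeff_C_mul_X_pow]
          split_ifs with hS
          · apply IslandAux.islandF_acyclic
            apply SimpleGraph.IsAcyclic.of_card_le_two
            simp [← hS]
          · rfl
        rw [hs, hP, coeff_sub, coeff_C_mul, coeff_C_mul, coeff_X_pow_mul', if_pos le_rfl]
        rw [show 2 = 1 + 1 from rfl, coeff_X_mul, coeff_one_add_X_pow, coeff_one_add_X_pow]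
        push_cast [Nat.choose_one_right]
        simp
      have : (Nat.card G.edgeSet : ℤ) = k + 1 := by linarith
      exact_mod_cast this
    have hc : islandF G Finset.univ = 1 := by
      have c1 : (X * islandPoly G).coeff (k + 1 + 1) = 1 := by
        rw [h, coeff_X_mul, coeff_add, coeff_C_mul, coeff_one_add_X_pow, coeff_one_add_X_pow]
        simp
      rw [hX, finsetSum_coeff, Finset.sum_eq_single Finset.univ] at c1
      · rw [coeff_C_mul_X_pow, if_pos] at c1
        · exact c1
        · rw [Finset.card_univ]; omega
      · intro S _ hS
        rw [coeff_C_mul_X_pow, if_neg]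
        intro hh
        exact hS (Finset.card_eq_iff_eq_univ S |>.1 (by omega))
      · simp
    have hiso : G.induce ((Finset.univ : Finset V) : Set V) ≃g G := by
      rw [Finset.coe_univ]
      exact SimpleGraph.induceUnivIso G
    have ce : Nat.card (G.induce ((Finset.univ : Finset V) : Set V)).edgeSet = Nat.card G.edgeSet :=
      Nat.card_congr hiso.mapEdgeSet
    have cc : Nat.card (G.induce ((Finset.univ : Finset V) : Set V)).ConnectedComponent
        = Nat.card G.ConnectedComponent :=
      Nat.card_congr hiso.connectedComponentEquiv
    unfold islandF at hc
    rw [ce, cc, hm, Finset.card_univ] at hc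
    have hc1 : Nat.card G.ConnectedComponent = 1 := by omega
    rw [SimpleGraph.isTree_iff_connected_and_card]
    refine ⟨?_, by rw [hm, Nat.card_eq_fintype_card]; omega⟩
    obtain ⟨hsub, hne⟩ := Nat.card_eq_one_iff_unique.1 hc1
    have : Nonempty V := Fintype.card_pos_iff.1 (by omega)
    refine ⟨fun u v => ?_⟩
    exact SimpleGraph.ConnectedComponent.eq.1 (Subsingleton.elim _ _)
end

section
/- Let G be a connected simple graph on a finite vertex set with n ≥ 3 vertices, and suppose there exist integers a and b such that β_G(x) = a·(1+x)^{n−1} + b·(1+x)^{n−2} as polynomials with integer coefficients. Then a = 1, b = n−1, and G is a tree (connected and acyclic). -/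
open Polynomial

theorem islandF_bot {V : Type*} [Fintype V] [DecidableEq V]
    (G : SimpleGraph V) (S : Finset V) (h : G.induce (S : Set V) = ⊥) :
    islandF G S = S.card := by
  have h1 : Nat.card ((⊥ : SimpleGraph (S : Set V)).ConnectedComponent) = S.card := by
    have : Nat.card (S : Set V) = S.card := by simp
    rw [← this]
    symm
    refine Nat.card_eq_of_bijective (SimpleGraph.connectedComponentMk ⊥) ⟨?_, ?_⟩
    · intro x y hxy
      simpa using SimpleGraph.ConnectedComponent.exact hxy
    · intro c
      induction c using SimpleGraph.ConnectedComponent.ind with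
      | _ v => exact ⟨v, rfl⟩
  unfold islandF
  rw [h, h1]
  simp
  ring

theorem islandF_top {V : Type*} [Fintype V] [DecidableEq V]
    (G : SimpleGraph V) (S : Finset V) (hS : S.card = 2) (h : G.induce (S : Set V) = ⊤) :
    islandF G S = 1 := by
  have hne : Nonempty (S : Set V) := by
    have : S.Nonempty := by rw [← Finset.card_pos]; omega
    exact this.to_subtype
  have h1 : Nat.card ((⊤ : SimpleGraph (S : Set V)).ConnectedComponent) = 1 := by
    have hc : (⊤ : SimpleGraph (S : Set V)).Connected := SimpleGraph.connected_top
    have := hc.preconnected.subsingleton_connectedComponent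
    have : Nonempty ((⊤ : SimpleGraph (S : Set V)).ConnectedComponent) :=
      ⟨SimpleGraph.connectedComponentMk _ hne.some⟩
    exact Nat.card_unique
  have h2 : Nat.card ((⊤ : SimpleGraph (S : Set V)).edgeSet) = 1 := by
    classical
    rw [Nat.card_eq_fintype_card, ← SimpleGraph.edgeFinset_card,
      SimpleGraph.card_edgeFinset_top_eq_card_choose_two]
    simp [hS]
  unfold islandF
  rw [h, h1, h2, hS]
  norm_num

theorem islandF_pair {V : Type*} [Fintype V] [DecidableEq V]
    (G : SimpleGraph V) (u v : V) (huv : u ≠ v) [Decidable (G.Adj u v)] :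
    islandF G {u, v} = 2 - if G.Adj u v then 1 else 0 := by
  have hc : ({u, v} : Finset V).card = 2 := Finset.card_pair huv
  split_ifs with h
  · rw [islandF_top G _ hc]
    · norm_num
    · ext ⟨x, hx⟩ ⟨y, hy⟩
      have h' := h.symm
      simp only [Finset.coe_insert, Finset.coe_singleton, Set.mem_insert_iff,
        Set.mem_singleton_iff] at hx hy
      rcases hx with rfl | rfl <;> rcases hy with rfl | rfl <;> simp [h, h', huv, huv.symm]
  · rw [islandF_bot G, hc]
    · norm_num
    · ext ⟨x, hx⟩ ⟨y, hy⟩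
      have h' : ¬ G.Adj v u := fun k => h k.symm
      simp only [Finset.coe_insert, Finset.coe_singleton, Set.mem_insert_iff,
        Set.mem_singleton_iff] at hx hy
      rcases hx with rfl | rfl <;> rcases hy with rfl | rfl <;> simp [h, h']

theorem islandF_univ {V : Type*} [Fintype V] [DecidableEq V]
    (G : SimpleGraph V) (hconn : G.Connected) :
    islandF G Finset.univ = 2 + Nat.card G.edgeSet - Fintype.card V := by
  have := hconn.preconnected.subsingleton_connectedComponent
  have := hconn.nonempty
  have : Nonempty G.ConnectedComponent := ⟨G.connectedComponentMk (Classical.arbitrary V)⟩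
  have h0 : Nat.card G.ConnectedComponent = 1 := Nat.card_unique
  unfold islandF
  rw [Finset.coe_univ, Nat.card_congr (SimpleGraph.induceUnivIso G).connectedComponentEquiv,
    Nat.card_congr (SimpleGraph.induceUnivIso G).mapEdgeSet, h0]
  simp

theorem islandPoly_coeff {V : Type*} [Fintype V] [DecidableEq V]
    (G : SimpleGraph V) (k : ℕ) :
    (islandPoly G).coeff k = ∑ S ∈ Finset.powersetCard (k + 1) Finset.univ, islandF G S := by
  unfold islandPoly
  rw [Polynomial.finsetSum_coeff]
  simp only [Polynomial.coeff_C_mul, Polynomial.coeff_X_pow, mul_ite, mul_one, mul_zero]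
  rw [← Finset.sum_filter]
  apply Finset.sum_congr _ (fun _ _ => rfl)
  ext S
  simp only [Finset.mem_filter, Finset.mem_powerset, Finset.mem_powersetCard, ← Finset.card_pos]
  constructor
  · rintro ⟨⟨h1, h2⟩, h3⟩
    exact ⟨h1, by omega⟩
  · rintro ⟨h1, h2⟩
    exact ⟨⟨h1, by omega⟩, by omega⟩

theorem islandF_sum_pairs {V : Type*} [Fintype V] [DecidableEq V]
    (G : SimpleGraph V) :
    ∑ S ∈ Finset.powersetCard 2 Finset.univ, islandF G S
      = 2 * (Fintype.card V).choose 2 - Nat.card G.edgeSet := by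
  classical
  have key : ∀ S ∈ Finset.powersetCard 2 (Finset.univ : Finset V), islandF G S =
      2 - if S ∈ G.edgeFinset.image Sym2.toFinset then 1 else 0 := by
    intro S hS
    obtain ⟨u, v, huv, rfl⟩ := Finset.card_eq_two.1 (Finset.mem_powersetCard.1 hS).2
    rw [islandF_pair G u v huv]
    congr 1
    refine if_congr ?_ rfl rfl
    rw [Finset.mem_image]
    constructor
    · intro h
      exact ⟨s(u, v), by simpa using h, by ext; simp⟩
    · rintro ⟨e, he, heq⟩
      have : e = s(u, v) := by
        refine ((Sym2.mem_and_mem_iff huv).1 ⟨?_, ?_⟩)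
        · rw [← Sym2.mem_toFinset, heq]; simp
        · rw [← Sym2.mem_toFinset, heq]; simp
      subst this
      simpa using he
  rw [Finset.sum_congr rfl key, Finset.sum_sub_distrib, Finset.sum_const,
    Finset.card_powersetCard, ← Finset.sum_filter, Finset.sum_const]
  have h1 : (Finset.powersetCard 2 (Finset.univ : Finset V)).filter
      (fun S => S ∈ G.edgeFinset.image Sym2.toFinset) = G.edgeFinset.image Sym2.toFinset := by
    ext S
    simp only [Finset.mem_filter, Finset.mem_powersetCard, and_iff_right_iff_imp]
    intro h
    obtain ⟨e, he, rfl⟩ := Finset.mem_image.1 h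
    refine ⟨Finset.subset_univ _, ?_⟩
    rw [Sym2.card_toFinset_of_not_isDiag]
    exact G.not_isDiag_of_mem_edgeFinset he
  have h2 : (G.edgeFinset.image Sym2.toFinset).card = Nat.card G.edgeSet := by
    rw [Finset.card_image_of_injective, SimpleGraph.edgeFinset_card, Nat.card_eq_fintype_card]
    intro e f hef
    apply Sym2.ext
    intro x
    rw [← Sym2.mem_toFinset, ← Sym2.mem_toFinset, hef]
  rw [h1, h2]
  simp
  ring


theorem islandPoly_tree_characterization {V : Type*} [Fintype V] [DecidableEq V]
    (G : SimpleGraph V) (hconn : G.Connected) (hn : 3 ≤ Fintype.card V)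
    (a b : ℤ)
    (h : islandPoly G
      = Polynomial.C a * (1 + Polynomial.X) ^ (Fintype.card V - 1)
        + Polynomial.C b * (1 + Polynomial.X) ^ (Fintype.card V - 2)) :
    a = 1 ∧ b = (Fintype.card V : ℤ) - 1 ∧ G.IsTree := by
  obtain ⟨k, hk⟩ : ∃ k, Fintype.card V = k + 3 := ⟨Fintype.card V - 3, by omega⟩
  have hcoef : ∀ j, (islandPoly G).coeff j = a * ((k + 2).choose j) + b * ((k + 1).choose j) := by
    intro j
    rw [h, hk]
    simp only [Polynomial.coeff_add, Polynomial.coeff_C_mul]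
    rw [show k + 3 - 1 = k + 2 by omega, show k + 3 - 2 = k + 1 by omega,
      Polynomial.coeff_one_add_X_pow, Polynomial.coeff_one_add_X_pow]
  have e0 : ((k : ℤ) + 3) = a + b := by
    have := hcoef 0
    rw [islandPoly_coeff] at this
    have hs : ∀ S ∈ Finset.powersetCard (0 + 1) (Finset.univ : Finset V), islandF G S = 1 := by
      intro S hS
      have hc := (Finset.mem_powersetCard.1 hS).2
      obtain ⟨v, rfl⟩ := Finset.card_eq_one.1 hc
      rw [islandF_bot]
      · simp
      · ext ⟨x, hx⟩ ⟨y, hy⟩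
        simp at hx hy
        subst hx hy
        simp
    rw [Finset.sum_congr rfl hs] at this
    simpa [hk] using this
  have e1 := hcoef 1
  rw [islandPoly_coeff, islandF_sum_pairs, hk] at e1
  have e2 := hcoef (k + 2)
  rw [islandPoly_coeff, show k + 2 + 1 = (Finset.univ : Finset V).card by rw [Finset.card_univ, hk], Finset.powersetCard_self,
    Finset.sum_singleton, islandF_univ G hconn, hk] at e2
  have hch : (2 : ℤ) * ((k + 3).choose 2 : ℕ) = (k + 3) * (k + 2) := by
    have := Nat.triangle_succ (k + 2)
    have h3 := Nat.choose_two_right (k + 3)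
    have h4 : 2 ∣ (k + 3) * (k + 3 - 1) := (Nat.even_mul_pred_self (k + 3)).two_dvd
    have h5 : 2 * (k + 3).choose 2 = (k + 3) * (k + 2) := by
      rw [h3, Nat.mul_div_cancel' h4]; rfl
    exact_mod_cast h5
  rw [hch] at e1
  simp at e1 e2
  have hm : (Nat.card G.edgeSet : ℤ) = k + 2 := by
    have hb : b = k + 3 - a := by linarith
    subst hb
    simp
    nlinarith
  have ha : a = 1 := by simp at hm; linarith
  refine ⟨ha, by rw [hk]; push_cast; linarith, ?_⟩
  rw [SimpleGraph.isTree_iff_connected_and_card]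
  refine ⟨hconn, ?_⟩
  rw [Nat.card_eq_fintype_card (α := V), hk]
  have : Nat.card G.edgeSet = k + 2 := by exact_mod_cast hm
  omega
end
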